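/- arXiv:2008.00738 — 3 statements merged into one kernel-verified Lean document; each statement's English description precedes it below -/
import Mathlib

section
/- Let α, β, γ, δ > 0 with max{α,β} ≤ min{γ,δ}. Let n ≥ 1 and let T : ℤⁿ×ℤⁿ → ℤⁿ be translation equivariant and monotone in the sense of Knothe. Suppose f, g, h, k : ℤⁿ → [0,∞) satisfy f(x)^α · g(y)^β ≤ h(T(x,y))^γ · k(x+y−T(x,y))^δ for all x, y ∈ ℤⁿ. Then (∑_{x∈ℤⁿ} f(x))^α · (∑_{x∈ℤⁿ} g(x))^β ≤ (∑_{x∈ℤⁿ} h(x))^γ · (∑_{x∈ℤⁿ} k(x))^δ, where the sums are taken in the extended nonnegative reals [0,∞]. -/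
open scoped BigOperators ENNReal NNReal

/-- A *total additive ordering* on an abelian group `G`: a linear order (given as
a relation `r`, meaning `r a b ↔ a ⪯ b`) compatible with addition. -/
def TotalAdditiveOrdering {G : Type*} [AddCommGroup G] (r : G → G → Prop) : Prop :=
  (∀ a, r a a) ∧ (∀ a b, r a b → r b a → a = b) ∧
  (∀ a b c, r a b → r b c → r a c) ∧ (∀ a b, r a b ∨ r b a) ∧
  (∀ a b c, r a b → r (a + c) (b + c))

/-- `u` is the minimal positive element of the ordering `r`, i.e. the minimum of
`{g : 0 ≺ g}`. -/
def IsMinimalPositive {G : Type*} [AddCommGroup G] (r : G → G → Prop) (u : G) : Prop :=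
  (r 0 u ∧ u ≠ 0) ∧ ∀ g, r 0 g → g ≠ 0 → r u g

/-- `T` is translation equivariant: `T (x+z) (y+z) = T x y + z`. -/
def TranslationEquivariant {G : Type*} [AddCommGroup G] (T : G → G → G) : Prop :=
  ∀ x y z, T (x + z) (y + z) = T x y + z

/-- `T : ℤⁿ × ℤⁿ → ℤⁿ` is triangular and monotone with respect to the decomposition
`ℤⁿ = G₁ × ⋯ × G_k` (encoded by the additive equivalence `e`, with `Gᵢ = ℤ^(ℓ i)`) and the
orderings `ord i` on the blocks: (i) the `i`-th block of `T x y` depends only on the blocks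
`≤ i` of `x` and `y`; (ii) fixing the blocks `< i`, the `i`-th block of `T` is nondecreasing
in the `i`-th blocks of both arguments. -/
def KnotheWith {n k : ℕ} (ℓ : Fin k → ℕ)
    (e : (Fin n → ℤ) ≃+ ((i : Fin k) → Fin (ℓ i) → ℤ))
    (ord : (i : Fin k) → (Fin (ℓ i) → ℤ) → (Fin (ℓ i) → ℤ) → Prop)
    (T : (Fin n → ℤ) → (Fin n → ℤ) → (Fin n → ℤ)) : Prop :=
  (∀ (i : Fin k) (x y x' y' : Fin n → ℤ),
      (∀ j, j ≤ i → e x j = e x' j ∧ e y j = e y' j) →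
      e (T x y) i = e (T x' y') i) ∧
  (∀ (i : Fin k) (x y x' y' : Fin n → ℤ),
      (∀ j, j < i → e x j = e x' j ∧ e y j = e y' j) →
      ord i (e x i) (e x' i) → ord i (e y i) (e y' i) →
      ord i (e (T x y) i) (e (T x' y') i))

/-- `T` is monotone in the sense of Knothe: there is a decomposition
`ℤⁿ = G₁ × ⋯ × G_k` with `Gᵢ = ℤ^(ℓᵢ)`, `ℓ₁ + ⋯ + ℓ_k = n`, together with total additive
orderings on the `Gᵢ`, each admitting a minimal positive element, with respect to which `T`
is triangular and monotone. -/
def KnotheMonotone {n : ℕ} (T : (Fin n → ℤ) → (Fin n → ℤ) → (Fin n → ℤ)) : Prop :=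
  ∃ (k : ℕ) (_ : 1 ≤ k) (ℓ : Fin k → ℕ) (_ : ∑ i, ℓ i = n)
    (e : (Fin n → ℤ) ≃+ ((i : Fin k) → Fin (ℓ i) → ℤ))
    (ord : (i : Fin k) → (Fin (ℓ i) → ℤ) → (Fin (ℓ i) → ℤ) → Prop),
    (∀ i, TotalAdditiveOrdering (ord i) ∧ ∃ u, IsMinimalPositive (ord i) u) ∧
    KnotheWith ℓ e ord T

/-!
Normalise `f` and `g` to probability measures and couple them monotonically, so that the pairs
`(X, Y)` run through a finite chain. By the Gibbs inequality, averaging the logarithm of the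
pointwise bound over the coupling reduces the claim to `H(X) + H(Y) ≤ H(U) + H(V)` for `U = T(X, Y)`
and `V = X + Y - U`. All four entropies are built up along the chain: adding an atom of mass `p`
gains `η(p + s) - η(s)`, where `η(t) = -t log t` and `s` is the mass of the earlier atoms at the
same value. These sets of earlier atoms are nested, and for `U` and `V` their union and
intersection are contained in those for `X` and `Y`, so concavity of `η` gives the comparison of
gains. Blocks are then treated one at a time by Fubini, applying the inequality to the sums over
the later blocks.
-/

section Increments

lemma concaveOn_increment_antitone {𝕜 : Type*} [Field 𝕜] [LinearOrder 𝕜] [IsStrictOrderedRing 𝕜]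
    {s : Set 𝕜} {φ : 𝕜 → 𝕜} (hφ : ConcaveOn 𝕜 s φ) {a b p : 𝕜} (ha : a ∈ s) (hb : p + b ∈ s)
    (hab : a ≤ b) (hp : 0 ≤ p) : φ (p + b) - φ b ≤ φ (p + a) - φ a := by
  obtain hd | hd := (show 0 ≤ p + (b - a) by linarith).eq_or_lt
  · obtain rfl : a = b := by linarith
    rfl
  have hab' : 0 ≤ (b - a) / (p + (b - a)) := div_nonneg (sub_nonneg.2 hab) hd.le
  have hp' : 0 ≤ p / (p + (b - a)) := div_nonneg hp hd.le
  have h₁ := hφ.2 ha hb hab' hp' (by field_simp; ring)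
  have h₂ := hφ.2 ha hb hp' hab' (by field_simp)
  have e₁ : (b - a) / (p + (b - a)) * a + p / (p + (b - a)) * (p + b) = p + a := by
    field_simp; ring
  have e₂ : p / (p + (b - a)) * a + (b - a) / (p + (b - a)) * (p + b) = b := by
    field_simp; ring
  simp only [smul_eq_mul, e₁, e₂] at h₁ h₂
  have e : ∀ u v : 𝕜, ((b - a) / (p + (b - a)) * u + p / (p + (b - a)) * v) +
      (p / (p + (b - a)) * u + (b - a) / (p + (b - a)) * v) = u + v := by
    intro u v; field_simp; ring
  linarith [e (φ a) (φ (p + b))]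

lemma sum_increments_ordered {ι R M : Type*} [LinearOrder ι] [AddCommMonoid R] [AddCommGroup M]
    (φ : R → M) (p : ι → R) (s : Finset ι) :
    ∑ i ∈ s, (φ (p i + ∑ j ∈ s with j < i, p j) - φ (∑ j ∈ s with j < i, p j)) =
      φ (∑ i ∈ s, p i) - φ 0 := by
  induction s using Finset.induction_on_max with
  | empty => simp
  | insert a s ha ih =>
    have has : a ∉ s := fun h ↦ (ha a h).false
    have filter_a : {j ∈ insert a s | j < a} = s := by
      rw [Finset.filter_insert, if_neg (lt_irrefl a), Finset.filter_true_of_mem ha]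
    have filter_of_mem : ∀ i ∈ s, {j ∈ insert a s | j < i} = {j ∈ s | j < i} := fun i hi ↦ by
      rw [Finset.filter_insert, if_neg (ha i hi).asymm]
    have sum_s : ∑ i ∈ s, (φ (p i + ∑ j ∈ insert a s with j < i, p j) -
        φ (∑ j ∈ insert a s with j < i, p j)) = φ (∑ i ∈ s, p i) - φ 0 :=
      ih ▸ Finset.sum_congr rfl fun i hi ↦ by rw [filter_of_mem i hi]
    rw [Finset.sum_insert has, Finset.sum_insert has, filter_a, sum_s, sub_add_sub_cancel]

lemma add_le_add_of_antitone_of_comparable {L M : Type*} [Lattice L] [AddCommMonoid M]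
    [PartialOrder M] [IsOrderedAddMonoid M] {φ : L → M} (hφ : Antitone φ) {a b c d : L}
    (hab : a ≤ b ∨ b ≤ a) (hcd : c ≤ d ∨ d ≤ c) (hsup : c ⊔ d ≤ a ⊔ b) (hinf : c ⊓ d ≤ a ⊓ b) :
    φ a + φ b ≤ φ c + φ d := by
  have sup_add_inf : ∀ {x y : L}, x ≤ y ∨ y ≤ x → φ (x ⊔ y) + φ (x ⊓ y) = φ x + φ y := by
    rintro x y (h | h) <;> simp [h, add_comm]
  rw [← sup_add_inf hab, ← sup_add_inf hcd]
  exact add_le_add (hφ hsup) (hφ hinf)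

end Increments

section Entropy

variable {ι κ : Type*} [Fintype ι] [DecidableEq κ]

/-- The mass that the weights `p` on `ι` give to the value `u` of `U`; for `∑ i, p i = 1`, the
probability of `U = u`. -/
def law (p : ι → ℝ) (U : ι → κ) (u : κ) : ℝ := ∑ i with U i = u, p i

/-- The Shannon entropy (in nats) of the random variable `U` on the finite probability space
`(ι, p)`. -/
noncomputable def entropy (p : ι → ℝ) (U : ι → κ) : ℝ :=
  ∑ u ∈ Finset.univ.image U, (law p U u).negMulLog

variable {p : ι → ℝ}

lemma law_apply_pos (hp : ∀ i, 0 < p i) (U : ι → κ) (i : ι) : 0 < law p U (U i) :=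
  Finset.sum_pos (fun j _ ↦ hp j) ⟨i, by simp⟩

lemma law_le_sum (hp : ∀ i, 0 ≤ p i) (U : ι → κ) (u : κ) : law p U u ≤ ∑ i, p i :=
  Finset.sum_le_univ_sum_of_nonneg hp

lemma entropy_nonneg (hp : ∀ i, 0 ≤ p i) (hp₁ : ∑ i, p i = 1) (U : ι → κ) : 0 ≤ entropy p U :=
  Finset.sum_nonneg fun u _ ↦
    Real.negMulLog_nonneg (Finset.sum_nonneg fun i _ ↦ hp i) (hp₁ ▸ law_le_sum hp U u)

lemma entropy_eq_neg_sum_log (p : ι → ℝ) (U : ι → κ) :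
    entropy p U = -∑ i, p i * Real.log (law p U (U i)) := by
  rw [← Finset.sum_neg_distrib]
  refine Finset.sum_image' _ fun i _ ↦ ?_
  calc (law p U (U i)).negMulLog = (∑ j with U j = U i, p j) * -Real.log (law p U (U i)) := by
        rw [Real.negMulLog, neg_mul, mul_neg, law]
    _ = ∑ j with U j = U i, p j * -Real.log (law p U (U i)) := Finset.sum_mul ..
    _ = ∑ j with U j = U i, -(p j * Real.log (law p U (U j))) :=
        Finset.sum_congr rfl fun j hj ↦ by rw [(Finset.mem_filter.1 hj).2, mul_neg]

lemma sum_mul_log_const_mul_law (hp : ∀ i, 0 < p i) (hp₁ : ∑ i, p i = 1) (U : ι → κ) {a : ℝ}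
    (ha : 0 < a) :
    ∑ i, p i * Real.log (a * law p U (U i)) = Real.log a - entropy p U := by
  have log_mul : ∀ i, p i * Real.log (a * law p U (U i)) =
      p i * Real.log a + p i * Real.log (law p U (U i)) := fun i ↦ by
    rw [Real.log_mul ha.ne' (law_apply_pos hp U i).ne', mul_add]
  simp only [log_mul, Finset.sum_add_distrib, ← Finset.sum_mul, hp₁, one_mul,
    entropy_eq_neg_sum_log, sub_neg_eq_add]

lemma gibbs_inequality (hp : ∀ i, 0 < p i) (hp₁ : ∑ i, p i = 1) (U : ι → κ)
    {h : κ → ℝ} (hh : ∀ i, 0 < h (U i)) :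
    ∑ i, p i * Real.log (h (U i)) + entropy p U ≤
      Real.log (∑ u ∈ Finset.univ.image U, h u) := by
  have hl := law_apply_pos hp U
  have sum_ratio : ∑ u ∈ Finset.univ.image U, h u = ∑ i, p i * (h (U i) / law p U (U i)) := by
    refine Finset.sum_image' _ fun i _ ↦ ?_
    calc h (U i) = law p U (U i) * (h (U i) / law p U (U i)) := (mul_div_cancel₀ _ (hl i).ne').symm
      _ = ∑ j with U j = U i, p j * (h (U i) / law p U (U i)) := Finset.sum_mul ..
      _ = ∑ j with U j = U i, p j * (h (U j) / law p U (U j)) :=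
        Finset.sum_congr rfl fun j hj ↦ by rw [(Finset.mem_filter.1 hj).2]
  calc ∑ i, p i * Real.log (h (U i)) + entropy p U
      = ∑ i, p i * Real.log (h (U i) / law p U (U i)) := by
        rw [entropy_eq_neg_sum_log, ← sub_eq_add_neg, ← Finset.sum_sub_distrib]
        exact Finset.sum_congr rfl fun i _ ↦ by
          rw [Real.log_div (hh i).ne' (hl i).ne', mul_sub]
    _ ≤ Real.log (∑ i, p i * (h (U i) / law p U (U i))) :=
        strictConcaveOn_log_Ioi.concaveOn.le_map_sum (fun i _ ↦ (hp i).le) hp₁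
          fun i _ ↦ div_pos (hh i) (hl i)
    _ = _ := by rw [sum_ratio]

end Entropy

section EntropyComparison

/-- The entropy gained when an atom of mass `p i` is added to a value which so far carries the
mass of the atoms in `A`. -/
noncomputable def entropyGain {ι : Type*} (p : ι → ℝ) (i : ι) (A : Finset ι) : ℝ :=
  (p i + ∑ j ∈ A, p j).negMulLog - (∑ j ∈ A, p j).negMulLog

lemma entropyGain_antitone {ι : Type*} {p : ι → ℝ} (hp : ∀ i, 0 ≤ p i) (i : ι) :
    Antitone (entropyGain p i) := by
  have sum_nonneg : ∀ A : Finset ι, 0 ≤ ∑ j ∈ A, p j := fun A ↦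
    Finset.sum_nonneg fun j _ ↦ hp j
  exact fun A B hAB ↦ concaveOn_increment_antitone Real.concaveOn_negMulLog (sum_nonneg A)
    (add_nonneg (hp i) (sum_nonneg B))
    (Finset.sum_le_sum_of_subset_of_nonneg hAB fun j _ _ ↦ hp j) (hp i)

variable {ι κ κ' : Type*} [LinearOrder ι] [Fintype ι]

/-- The earlier indices at which `U` already took the value `U i`. -/
def pastFiber [DecidableEq κ] (U : ι → κ) (i : ι) : Finset ι := {j | j < i ∧ U j = U i}

lemma mem_pastFiber [DecidableEq κ] {U : ι → κ} {i j : ι} :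
    j ∈ pastFiber U i ↔ j < i ∧ U j = U i := by
  simp [pastFiber]

lemma entropy_eq_sum_entropyGain [DecidableEq κ] (p : ι → ℝ) (U : ι → κ) :
    entropy p U = ∑ i, entropyGain p i (pastFiber U i) := by
  refine Finset.sum_image' _ fun i _ ↦ ?_
  have telescope := sum_increments_ordered Real.negMulLog p {j | U j = U i}
  rw [Real.negMulLog_zero, sub_zero] at telescope
  rw [law, ← telescope]
  refine Finset.sum_congr rfl fun j hj ↦ ?_
  rw [entropyGain, pastFiber, Finset.filter_filter, (Finset.mem_filter.1 hj).2]
  simp only [and_comm]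

lemma pastFiber_subset_or_subset [LinearOrder κ] [LinearOrder κ'] {U : ι → κ} {V : ι → κ'}
    (hU : Monotone U) (hV : Monotone V) (i : ι) :
    pastFiber U i ⊆ pastFiber V i ∨ pastFiber V i ⊆ pastFiber U i := by
  by_contra! h
  obtain ⟨⟨j, hjU, hjV⟩, ⟨l, hlV, hlU⟩⟩ := h.imp Finset.not_subset.1 Finset.not_subset.1
  rw [mem_pastFiber] at hjU hjV hlU hlV
  rcases le_total j l with hjl | hlj
  · exact hlU ⟨hlV.1, (hU hlV.1.le).antisymm (hjU.2 ▸ hU hjl)⟩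
  · exact hjV ⟨hjU.1, (hV hjU.1.le).antisymm (hlV.2 ▸ hV hlj)⟩

lemma entropy_add_entropy_le_of_fibers {κ₁ κ₂ κ₃ κ₄ : Type*} [LinearOrder κ₁] [LinearOrder κ₂]
    [LinearOrder κ₃] [LinearOrder κ₄] {p : ι → ℝ} (hp : ∀ i, 0 ≤ p i)
    {X : ι → κ₁} {Y : ι → κ₂} {U : ι → κ₃} {V : ι → κ₄}
    (hX : Monotone X) (hY : Monotone Y) (hU : Monotone U) (hV : Monotone V)
    (h_or : ∀ ⦃i j⦄, j ≤ i → U j = U i ∨ V j = V i → X j = X i ∨ Y j = Y i)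
    (h_and : ∀ ⦃i j⦄, j ≤ i → U j = U i → V j = V i → X j = X i ∧ Y j = Y i) :
    entropy p X + entropy p Y ≤ entropy p U + entropy p V := by
  simp only [entropy_eq_sum_entropyGain, ← Finset.sum_add_distrib]
  refine Finset.sum_le_sum fun i _ ↦ add_le_add_of_antitone_of_comparable
    (entropyGain_antitone hp i) (pastFiber_subset_or_subset hX hY i)
    (pastFiber_subset_or_subset hU hV i) (fun j ↦ ?_) (fun j ↦ ?_)
  · simp only [Finset.sup_eq_union, Finset.mem_union, mem_pastFiber, ← and_or_left]
    exact fun ⟨hj, hUV⟩ ↦ ⟨hj, h_or hj.le hUV⟩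
  · simp only [Finset.inf_eq_inter, Finset.mem_inter, mem_pastFiber, ← and_and_left]
    exact fun ⟨hj, hUV⟩ ↦ ⟨hj, h_and hj.le hUV.1 hUV.2⟩

end EntropyComparison

section Coupling

variable {G H : Type*} [LinearOrder G] [LinearOrder H]

/-- The mass that the weights `μ` on `s` give to the points strictly below `x`. -/
def massBelow (s : Finset G) (μ : G → ℝ) (x : G) : ℝ := ∑ z ∈ s with z < x, μ z

/-- The length of the intersection of the intervals `[a, b]` and `[c, d]`. -/
def overlap (a b c d : ℝ) : ℝ := max 0 (min b d - max a c)

lemma overlap_swap (a b c d : ℝ) : overlap a b c d = overlap c d a b := by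
  rw [overlap, overlap, min_comm, max_comm a c]

lemma overlap_eq_clamp_sub_clamp {a b c d : ℝ} (hab : a ≤ b) (hcd : c ≤ d) :
    overlap a b c d = max a (min b d) - max a (min b c) := by
  unfold overlap
  grind

/-- The mass at `(x, y)` of the monotone (north-west corner) coupling of the weights `μ` on `s`
and `ν` on `t`: both total masses are laid out as intervals in increasing order of the points. -/
def monotoneCoupling (s : Finset G) (t : Finset H) (μ : G → ℝ) (ν : H → ℝ) (x : G) (y : H) : ℝ :=
  overlap (massBelow s μ x) (μ x + massBelow s μ x) (massBelow t ν y) (ν y + massBelow t ν y)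

variable {s : Finset G} {t : Finset H} {μ : G → ℝ} {ν : H → ℝ}

lemma massBelow_nonneg (hμ : ∀ x, 0 ≤ μ x) (x : G) : 0 ≤ massBelow s μ x :=
  Finset.sum_nonneg fun z _ ↦ hμ z

lemma add_massBelow_eq_sum {x : G} (hx : x ∈ s) :
    μ x + massBelow s μ x = ∑ z ∈ s with z ≤ x, μ z := by
  rw [massBelow, ← Finset.sum_insert (by simp)]
  congr 1
  ext z
  simp only [Finset.mem_insert, Finset.mem_filter, le_iff_lt_or_eq]
  grind

lemma add_massBelow_le_sum (hμ : ∀ x, 0 ≤ μ x) {x : G} (hx : x ∈ s) :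
    μ x + massBelow s μ x ≤ ∑ z ∈ s, μ z := by
  rw [add_massBelow_eq_sum hx]
  exact Finset.sum_le_sum_of_subset_of_nonneg (Finset.filter_subset _ _) fun z _ _ ↦ hμ z

lemma add_massBelow_le_massBelow (hμ : ∀ x, 0 ≤ μ x) {x x' : G} (hx : x ∈ s) (hxx' : x < x') :
    μ x + massBelow s μ x ≤ massBelow s μ x' := by
  rw [add_massBelow_eq_sum hx]
  exact Finset.sum_le_sum_of_subset_of_nonneg
    (Finset.monotone_filter_right s fun z _ hz ↦ hz.trans_lt hxx') fun z _ _ ↦ hμ z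

lemma monotoneCoupling_swap (x : G) (y : H) :
    monotoneCoupling s t μ ν x y = monotoneCoupling t s ν μ y x :=
  overlap_swap ..

lemma sum_monotoneCoupling_right (hμ : ∀ x, 0 ≤ μ x) (hν : ∀ y, 0 ≤ ν y)
    (h : ∑ x ∈ s, μ x = ∑ y ∈ t, ν y) {x : G} (hx : x ∈ s) :
    ∑ y ∈ t, monotoneCoupling s t μ ν x y = μ x := by
  set a := massBelow s μ x
  have ha : 0 ≤ a := massBelow_nonneg hμ x
  have hb : μ x + a ≤ ∑ y ∈ t, ν y := h ▸ add_massBelow_le_sum hμ hx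
  have hab : a ≤ μ x + a := le_add_of_nonneg_left (hμ x)
  calc ∑ y ∈ t, monotoneCoupling s t μ ν x y
      = ∑ y ∈ t, (max a (min (μ x + a) (ν y + massBelow t ν y)) -
          max a (min (μ x + a) (massBelow t ν y))) :=
        Finset.sum_congr rfl fun y _ ↦
          overlap_eq_clamp_sub_clamp hab (le_add_of_nonneg_left (hν y))
    _ = max a (min (μ x + a) (∑ y ∈ t, ν y)) - max a (min (μ x + a) 0) :=
        sum_increments_ordered (fun r ↦ max a (min (μ x + a) r)) ν t
    _ = μ x := by
        rw [min_eq_left hb, min_eq_right (ha.trans hab), max_eq_right hab, max_eq_left ha,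
          add_sub_cancel_right]

lemma sum_monotoneCoupling_left (hμ : ∀ x, 0 ≤ μ x) (hν : ∀ y, 0 ≤ ν y)
    (h : ∑ x ∈ s, μ x = ∑ y ∈ t, ν y) {y : H} (hy : y ∈ t) :
    ∑ x ∈ s, monotoneCoupling s t μ ν x y = ν y := by
  simp only [monotoneCoupling_swap (s := s)]
  exact sum_monotoneCoupling_right hν hμ h.symm hy

lemma le_of_monotoneCoupling_pos (hμ : ∀ x, 0 ≤ μ x) (hν : ∀ y, 0 ≤ ν y) {x x' : G} {y y' : H}
    (hx : x ∈ s) (hy' : y' ∈ t) (h : 0 < monotoneCoupling s t μ ν x y)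
    (h' : 0 < monotoneCoupling s t μ ν x' y') (hxx' : x < x') : y ≤ y' := by
  by_contra! hyy'
  have hx := add_massBelow_le_massBelow hμ hx hxx'
  have hy := add_massBelow_le_massBelow hν hy' hyy'
  simp only [monotoneCoupling, overlap, lt_max_iff, lt_irrefl, false_or, sub_pos, max_lt_iff,
    lt_min_iff] at h h'
  linarith [h.2.1, h'.1.2]

lemma isChain_monotoneCoupling_pos (hμ : ∀ x, 0 ≤ μ x) (hν : ∀ y, 0 ≤ ν y) :
    IsChain (· ≤ ·)
      {z : G × H | (z.1 ∈ s ∧ z.2 ∈ t) ∧ 0 < monotoneCoupling s t μ ν z.1 z.2} := by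
  rintro z ⟨⟨hs, ht⟩, hz⟩ z' ⟨⟨hs', ht'⟩, hz'⟩ _
  rcases lt_trichotomy z.1 z'.1 with hlt | heq | hgt
  · exact .inl ⟨hlt.le, le_of_monotoneCoupling_pos hμ hν hs ht' hz hz' hlt⟩
  · exact (le_total z.2 z'.2).imp (⟨heq.le, ·⟩) (⟨heq.ge, ·⟩)
  · exact .inr ⟨hgt.le, le_of_monotoneCoupling_pos hμ hν hs' ht hz' hz hgt⟩

end Coupling

lemma sum_law_of_maps_to {ι κ : Type*} [Fintype ι] [DecidableEq κ] (p : ι → ℝ) {U : ι → κ}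
    {s : Finset κ} (hU : ∀ i, U i ∈ s) : ∑ u ∈ s, law p U u = ∑ i, p i :=
  Finset.sum_fiberwise_of_maps_to (fun i _ ↦ hU i) p

universe u v

lemma exists_monotone_coupling {G : Type u} {H : Type v} [LinearOrder G] [LinearOrder H]
    {s : Finset G} {t : Finset H} {μ : G → ℝ} {ν : H → ℝ} (hμ : ∀ x, 0 ≤ μ x) (hν : ∀ y, 0 ≤ ν y)
    (h : ∑ x ∈ s, μ x = ∑ y ∈ t, ν y) :
    ∃ (ι : Type (max u v)) (_ : LinearOrder ι) (_ : Fintype ι) (p : ι → ℝ) (X : ι → G) (Y : ι → H),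
      (∀ i, 0 < p i) ∧ Monotone X ∧ Monotone Y ∧ (∀ i, X i ∈ s ∧ Y i ∈ t) ∧
      (∀ x ∈ s, law p X x = μ x) ∧ ∀ y ∈ t, law p Y y = ν y := by
  classical
  let π : G × H → ℝ := fun z ↦ monotoneCoupling s t μ ν z.1 z.2
  let c : Finset (G × H) := {z ∈ s ×ˢ t | 0 < π z}
  have mem_c : ∀ z ∈ c, (z.1 ∈ s ∧ z.2 ∈ t) ∧ 0 < π z := fun z hz ↦ by
    simpa only [c, Finset.mem_filter, Finset.mem_product] using hz
  have chain : IsChain (· ≤ ·) (c : Set (G × H)) :=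
    (isChain_monotoneCoupling_pos hμ hν).mono mem_c
  have sum_c : ∀ P : G × H → Prop,
      ∑ i : {z // z ∈ c} with P i.1, π i.1 =
        ∑ x ∈ s, ∑ y ∈ t, if P (x, y) then π (x, y) else 0 := fun P ↦ by
    rw [Finset.sum_filter, Finset.sum_coe_sort c fun z ↦ if P z then π z else 0,
      ← Finset.sum_product' (f := fun x y ↦ if P (x, y) then π (x, y) else 0)]
    refine Finset.sum_subset (Finset.filter_subset _ _) fun z hz hzc ↦ ite_eq_right_iff.2 fun _ ↦ ?_
    have hz' : ¬0 < π z := fun h ↦ hzc (Finset.mem_filter.2 ⟨hz, h⟩)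
    exact (not_lt.1 hz').antisymm (le_max_left _ _)
  refine ⟨c, chain.linearOrder, inferInstance, fun i ↦ π i, fun i ↦ i.1.1, fun i ↦ i.1.2,
    fun i ↦ (mem_c i i.2).2, fun _ _ hij ↦ hij.1, fun _ _ hij ↦ hij.2, fun i ↦ (mem_c i i.2).1,
    fun x hx ↦ ?_, fun y hy ↦ ?_⟩
  · rw [← sum_monotoneCoupling_right hμ hν h hx]
    convert sum_c fun z ↦ z.1 = x using 1
    · exact Finset.sum_congr (by ext; simp) fun _ _ ↦ rfl
    · simp [Finset.sum_ite_irrel, hx, π]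
  · rw [← sum_monotoneCoupling_left hμ hν h hy]
    convert sum_c fun z ↦ z.2 = y using 1
    · exact Finset.sum_congr (by ext; simp) fun _ _ ↦ rfl
    · simp [hy, π]

section Complementary

variable {G : Type*} [AddCommGroup G] {T : G → G → G}

/-- The operation `x + y - T x y`, at which `k` is evaluated when `h` is evaluated at `T x y`. -/
def complementary (T : G → G → G) (x y : G) : G := x + y - T x y

lemma add_complementary (T : G → G → G) (x y : G) : T x y + complementary T x y = x + y :=
  add_sub_cancel _ _

lemma TranslationEquivariant.complementary (hT : TranslationEquivariant T) :
    TranslationEquivariant (complementary T) := by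
  intro x y z
  simp only [_root_.complementary, hT x y z]
  abel

variable [LinearOrder G] [IsOrderedAddMonoid G]

lemma monotone_complementary (hT : TranslationEquivariant T)
    (hm : Monotone (Function.uncurry T)) :
    Monotone (Function.uncurry (complementary T)) := by
  rintro ⟨x, y⟩ ⟨x', y'⟩ ⟨hx, hy⟩
  -- Translating by the total displacement moves `(x, y)` past `(x', y')` in both coordinates.
  have hle : T x' y' ≤ T x y + ((x' - x) + (y' - y)) := by
    rw [← hT]
    refine hm (Prod.mk_le_mk.2 ⟨?_, ?_⟩)
    · calc x' ≤ x' + (y' - y) := le_add_of_nonneg_right (sub_nonneg.2 hy)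
        _ = x + ((x' - x) + (y' - y)) := by abel
    · calc y' ≤ y' + (x' - x) := le_add_of_nonneg_right (sub_nonneg.2 hx)
        _ = y + ((x' - x) + (y' - y)) := by abel
  calc x + y - T x y = x' + y' - (T x y + ((x' - x) + (y' - y))) := by abel
    _ ≤ x' + y' - T x' y' := sub_le_sub_left hle _

lemma TranslationEquivariant.eq_or_eq_of_eq (hT : TranslationEquivariant T)
    (hm : Monotone (Function.uncurry T)) {x x' y y' : G} (hx : x ≤ x') (hy : y ≤ y')
    (h : T x y = T x' y') : x = x' ∨ y = y' := by
  by_contra! hne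
  set z := min (x' - x) (y' - y)
  have hz : 0 < z := lt_min (sub_pos.2 (hx.lt_of_ne hne.1)) (sub_pos.2 (hy.lt_of_ne hne.2))
  have hle : T (x + z) (y + z) ≤ T x' y' := hm (Prod.mk_le_mk.2
    ⟨le_sub_iff_add_le'.1 (min_le_left _ _), le_sub_iff_add_le'.1 (min_le_right _ _)⟩)
  rw [hT, ← h] at hle
  exact hle.not_gt (lt_add_of_pos_right _ hz)

lemma entropy_add_entropy_le (hT : TranslationEquivariant T) (hm : Monotone (Function.uncurry T))
    {ι : Type*} [LinearOrder ι] [Fintype ι] {p : ι → ℝ} (hp : ∀ i, 0 ≤ p i) {X Y : ι → G}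
    (hX : Monotone X) (hY : Monotone Y) :
    entropy p X + entropy p Y ≤
      entropy p (fun i ↦ T (X i) (Y i)) + entropy p (fun i ↦ complementary T (X i) (Y i)) := by
  have hm' := monotone_complementary hT hm
  refine entropy_add_entropy_le_of_fibers hp hX hY (hm.comp (hX.prodMk hY))
    (hm'.comp (hX.prodMk hY)) (fun i j hji h ↦ ?_) (fun i j hji hU hV ↦ ?_)
  · exact h.elim (hT.eq_or_eq_of_eq hm (hX hji) (hY hji))
      (hT.complementary.eq_or_eq_of_eq hm' (hX hji) (hY hji))
  · refine (add_eq_add_iff_eq_and_eq (hX hji) (hY hji)).1 ?_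
    rw [← add_complementary T (X j), ← add_complementary T (X i), hU, hV]

end Complementary

section RealWeights

variable {α β γ δ a b c d : ℝ}

lemma pos_and_pos_of_max_le_min (hα : 0 < α) (hmix : max α β ≤ min γ δ) : 0 < γ ∧ 0 < δ :=
  lt_min_iff.1 (hα.trans_le ((le_max_left α β).trans hmix))

lemma mul_add_mul_le_of_max_le_min (hα : 0 ≤ α) (hmix : max α β ≤ min γ δ) (ha : 0 ≤ a)
    (hb : 0 ≤ b) (hc : 0 ≤ c) (hd : 0 ≤ d) (h : a + b ≤ c + d) :
    α * a + β * b ≤ γ * c + δ * d :=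
  calc α * a + β * b ≤ max α β * a + max α β * b := by
        gcongr
        exacts [le_max_left _ _, le_max_right _ _]
    _ = max α β * (a + b) := (mul_add ..).symm
    _ ≤ max α β * (c + d) := mul_le_mul_of_nonneg_left h (hα.trans (le_max_left _ _))
    _ = max α β * c + max α β * d := mul_add ..
    _ ≤ γ * c + δ * d := by
        gcongr
        exacts [hmix.trans (min_le_left _ _), hmix.trans (min_le_right _ _)]

lemma rpow_mul_rpow_le_rpow_mul_rpow_iff (ha : 0 < a) (hb : 0 < b) (hc : 0 < c) (hd : 0 < d) :
    a ^ α * b ^ β ≤ c ^ γ * d ^ δ ↔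
      α * Real.log a + β * Real.log b ≤ γ * Real.log c + δ * Real.log d := by
  have log_rpow_mul : ∀ {x y r q : ℝ}, 0 < x → 0 < y →
      Real.log (x ^ r * y ^ q) = r * Real.log x + q * Real.log y := fun hx hy ↦ by
    rw [Real.log_mul (by positivity) (by positivity), Real.log_rpow hx, Real.log_rpow hy]
  rw [← Real.log_le_log_iff (by positivity) (by positivity), log_rpow_mul ha hb,
    log_rpow_mul hc hd]

lemma pos_and_pos_of_rpow_mul_rpow_pos (hγ : γ ≠ 0) (hδ : δ ≠ 0) (hc : 0 ≤ c) (hd : 0 ≤ d)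
    (h : 0 < c ^ γ * d ^ δ) : 0 < c ∧ 0 < d := by
  refine ⟨hc.lt_of_ne' ?_, hd.lt_of_ne' ?_⟩ <;> rintro rfl <;>
    simp [Real.zero_rpow, hγ, hδ] at h

lemma weighted_log_le_of_entropy_add_le {ι κ₁ κ₂ κ₃ κ₄ : Type*} [Fintype ι] [DecidableEq κ₁]
    [DecidableEq κ₂] [DecidableEq κ₃] [DecidableEq κ₄] {p : ι → ℝ} {X : ι → κ₁} {Y : ι → κ₂}
    {U : ι → κ₃} {V : ι → κ₄} {h : κ₃ → ℝ} {k : κ₄ → ℝ} (hα : 0 ≤ α) (hmix : max α β ≤ min γ δ)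
    (hp : ∀ i, 0 < p i) (hp₁ : ∑ i, p i = 1) (ha : 0 < a) (hb : 0 < b)
    (hh : ∀ i, 0 < h (U i)) (hk : ∀ i, 0 < k (V i))
    (hXY : entropy p X + entropy p Y ≤ entropy p U + entropy p V)
    (hyp : ∀ i, α * Real.log (a * law p X (X i)) + β * Real.log (b * law p Y (Y i)) ≤
      γ * Real.log (h (U i)) + δ * Real.log (k (V i))) :
    α * Real.log a + β * Real.log b ≤
      γ * Real.log (∑ u ∈ Finset.univ.image U, h u) +
        δ * Real.log (∑ v ∈ Finset.univ.image V, k v) := by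
  have hα' : 0 ≤ min γ δ := hα.trans ((le_max_left α β).trans hmix)
  have hp₀ : ∀ i, 0 ≤ p i := fun i ↦ (hp i).le
  have weighted_sum : ∀ r q (φ ψ : ι → ℝ), ∑ i, p i * (r * φ i + q * ψ i) =
      r * ∑ i, p i * φ i + q * ∑ i, p i * ψ i := fun r q φ ψ ↦ by
    simp only [mul_add, mul_left_comm (p _), Finset.sum_add_distrib, ← Finset.mul_sum]
  have averaged := Finset.sum_le_sum fun i (_ : i ∈ Finset.univ) ↦
    mul_le_mul_of_nonneg_left (hyp i) (hp i).le
  rw [weighted_sum, weighted_sum, sum_mul_log_const_mul_law hp hp₁ X ha,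
    sum_mul_log_const_mul_law hp hp₁ Y hb] at averaged
  have gibbs_h := mul_le_mul_of_nonneg_left (gibbs_inequality hp hp₁ U hh)
    (hα'.trans (min_le_left γ δ))
  have gibbs_k := mul_le_mul_of_nonneg_left (gibbs_inequality hp hp₁ V hk)
    (hα'.trans (min_le_right γ δ))
  have entropies : α * entropy p X + β * entropy p Y ≤ γ * entropy p U + δ * entropy p V :=
    mul_add_mul_le_of_max_le_min hα hmix (entropy_nonneg hp₀ hp₁ X) (entropy_nonneg hp₀ hp₁ Y)
      (entropy_nonneg hp₀ hp₁ U) (entropy_nonneg hp₀ hp₁ V) hXY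
  linarith

end RealWeights

section OrderedGroup

variable {G : Type*} [AddCommGroup G] [LinearOrder G] [IsOrderedAddMonoid G]
  {α β γ δ : ℝ} {T : G → G → G}

lemma rpow_mul_rpow_le_of_monotone_coupling (hα : 0 < α) (hmix : max α β ≤ min γ δ)
    (hT : TranslationEquivariant T) (hm : Monotone (Function.uncurry T))
    {ι : Type*} [LinearOrder ι] [Fintype ι] {p : ι → ℝ} (hp : ∀ i, 0 < p i) (hp₁ : ∑ i, p i = 1)
    {X Y : ι → G} (hX : Monotone X) (hY : Monotone Y) {a b : ℝ} (ha : 0 < a) (hb : 0 < b)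
    {h k : G → ℝ} (h_nonneg : ∀ x, 0 ≤ h x) (k_nonneg : ∀ x, 0 ≤ k x) {H K : ℝ}
    (hH : ∀ s : Finset G, ∑ x ∈ s, h x ≤ H) (hK : ∀ s : Finset G, ∑ x ∈ s, k x ≤ K)
    (hyp : ∀ i, (a * law p X (X i)) ^ α * (b * law p Y (Y i)) ^ β ≤
      h (T (X i) (Y i)) ^ γ * k (complementary T (X i) (Y i)) ^ δ) :
    a ^ α * b ^ β ≤ H ^ γ * K ^ δ := by
  set U : ι → G := fun i ↦ T (X i) (Y i)
  set V : ι → G := fun i ↦ complementary T (X i) (Y i)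
  obtain ⟨hγ, hδ⟩ := pos_and_pos_of_max_le_min hα hmix
  have hlX : ∀ i, 0 < a * law p X (X i) := fun i ↦ mul_pos ha (law_apply_pos hp X i)
  have hlY : ∀ i, 0 < b * law p Y (Y i) := fun i ↦ mul_pos hb (law_apply_pos hp Y i)
  have hpos : ∀ i, 0 < h (U i) ∧ 0 < k (V i) := fun i ↦
    pos_and_pos_of_rpow_mul_rpow_pos hγ.ne' hδ.ne' (h_nonneg _) (k_nonneg _) <|
      (mul_pos (Real.rpow_pos_of_pos (hlX i) _) (Real.rpow_pos_of_pos (hlY i) _)).trans_le (hyp i)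
  have : Nonempty ι := by
    by_contra! hι
    simp at hp₁
  have sum_pos : ∀ {q : G → ℝ} {W : ι → G}, (∀ i, 0 < q (W i)) →
      0 < ∑ x ∈ Finset.univ.image W, q x := fun hq ↦
    Finset.sum_pos (Finset.forall_mem_image.2 fun i _ ↦ hq i) (Finset.univ_nonempty.image _)
  have hU : 0 < ∑ u ∈ Finset.univ.image U, h u := sum_pos fun i ↦ (hpos i).1
  have hV : 0 < ∑ v ∈ Finset.univ.image V, k v := sum_pos fun i ↦ (hpos i).2
  calc a ^ α * b ^ β
      ≤ (∑ u ∈ Finset.univ.image U, h u) ^ γ * (∑ v ∈ Finset.univ.image V, k v) ^ δ :=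
        (rpow_mul_rpow_le_rpow_mul_rpow_iff ha hb hU hV).2 <|
          weighted_log_le_of_entropy_add_le hα.le hmix hp hp₁ ha hb (fun i ↦ (hpos i).1)
            (fun i ↦ (hpos i).2) (entropy_add_entropy_le hT hm (fun i ↦ (hp i).le) hX hY) fun i ↦
            (rpow_mul_rpow_le_rpow_mul_rpow_iff (hlX i) (hlY i) (hpos i).1 (hpos i).2).1 (hyp i)
    _ ≤ H ^ γ * K ^ δ :=
        mul_le_mul (Real.rpow_le_rpow hU.le (hH _) hγ.le) (Real.rpow_le_rpow hV.le (hK _) hδ.le)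
          (Real.rpow_nonneg hV.le _) (Real.rpow_nonneg (hU.le.trans (hH _)) _)

lemma rpow_sum_mul_rpow_sum_le (hα : 0 < α) (hβ : 0 < β) (hmix : max α β ≤ min γ δ)
    (hT : TranslationEquivariant T) (hm : Monotone (Function.uncurry T)) {f g h k : G → ℝ≥0}
    (hh : Summable h) (hk : Summable k)
    (hyp : ∀ x y, f x ^ α * g y ^ β ≤ h (T x y) ^ γ * k (x + y - T x y) ^ δ) (s t : Finset G) :
    (∑ x ∈ s, f x) ^ α * (∑ y ∈ t, g y) ^ β ≤ (∑' x, h x) ^ γ * (∑' x, k x) ^ δ := by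
  rcases eq_or_ne (∑ x ∈ s, f x) 0 with hF | hF
  · simp [hF, NNReal.zero_rpow hα.ne']
  rcases eq_or_ne (∑ y ∈ t, g y) 0 with hG | hG
  · simp [hG, NNReal.zero_rpow hβ.ne']
  set a := ∑ x ∈ s, f x
  set b := ∑ y ∈ t, g y
  have sum_f : ∑ x ∈ s, ((f x / a : ℝ≥0) : ℝ) = 1 := by
    rw [← NNReal.coe_sum, ← Finset.sum_div, div_self hF, NNReal.coe_one]
  have sum_g : ∑ y ∈ t, ((g y / b : ℝ≥0) : ℝ) = 1 := by
    rw [← NNReal.coe_sum, ← Finset.sum_div, div_self hG, NNReal.coe_one]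
  obtain ⟨ι, _, _, p, X, Y, hp, hX, hY, hst, law_X, law_Y⟩ :=
    exists_monotone_coupling (fun x ↦ (f x / a).coe_nonneg) (fun y ↦ (g y / b).coe_nonneg)
      (sum_f.trans sum_g.symm)
  have hp₁ : ∑ i, p i = 1 := by
    rw [← sum_law_of_maps_to p fun i ↦ (hst i).1, Finset.sum_congr rfl law_X, sum_f]
  have sum_le_tsum : ∀ {q : G → ℝ≥0}, Summable q → ∀ u : Finset G,
      ∑ x ∈ u, (q x : ℝ) ≤ (∑' x, q x : ℝ≥0) := fun hq u ↦
    mod_cast hq.sum_le_tsum u fun _ _ ↦ zero_le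
  have mul_law_X : ∀ i, a * law p X (X i) = f (X i) := fun i ↦ by
    rw [law_X _ (hst i).1, ← NNReal.coe_mul, mul_div_cancel₀ _ hF]
  have mul_law_Y : ∀ i, b * law p Y (Y i) = g (Y i) := fun i ↦ by
    rw [law_Y _ (hst i).2, ← NNReal.coe_mul, mul_div_cancel₀ _ hG]
  exact_mod_cast rpow_mul_rpow_le_of_monotone_coupling hα hmix hT hm hp hp₁ hX hY
    (NNReal.coe_pos.2 (pos_iff_ne_zero.2 hF)) (NNReal.coe_pos.2 (pos_iff_ne_zero.2 hG))
    (fun x ↦ (h x).coe_nonneg) (fun x ↦ (k x).coe_nonneg) (sum_le_tsum hh) (sum_le_tsum hk)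
    fun i ↦ by
      rw [mul_law_X, mul_law_Y]
      exact_mod_cast hyp (X i) (Y i)

end OrderedGroup

section BrunnMinkowski

/-- The weighted Brunn–Minkowski inequality for the operation `T`: a pointwise bound
`f(x)^α g(y)^β ≤ h(T(x,y))^γ k(x+y-T(x,y))^δ` implies the same bound for the total masses. The
functions take values in `[0, ∞]` so that partial sums over a factor of a product are again
admissible. -/
def SatisfiesBrunnMinkowski {G : Type*} [AddCommGroup G] (α β γ δ : ℝ) (T : G → G → G) : Prop :=
  ∀ f g h k : G → ℝ≥0∞,
    (∀ x y, f x ^ α * g y ^ β ≤ h (T x y) ^ γ * k (x + y - T x y) ^ δ) →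
      (∑' x, f x) ^ α * (∑' x, g x) ^ β ≤ (∑' x, h x) ^ γ * (∑' x, k x) ^ δ

variable {G H : Type*} [AddCommGroup G] [AddCommGroup H] {α β γ δ : ℝ}

lemma ennreal_iSup_rpow {ι : Sort*} (a : ι → ℝ≥0∞) {r : ℝ} (hr : 0 < r) :
    (⨆ i, a i) ^ r = ⨆ i, a i ^ r :=
  (ENNReal.orderIsoRpow r hr).map_iSup a

lemma rpow_tsum_mul_rpow_tsum_le_iff {ι κ : Type*} (hα : 0 < α) (hβ : 0 < β) {f : ι → ℝ≥0∞}
    {g : κ → ℝ≥0∞} {R : ℝ≥0∞} :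
    (∑' x, f x) ^ α * (∑' y, g y) ^ β ≤ R ↔
      ∀ (s : Finset ι) (t : Finset κ), (∑ x ∈ s, f x) ^ α * (∑ y ∈ t, g y) ^ β ≤ R := by
  simp only [ENNReal.tsum_eq_iSup_sum, ennreal_iSup_rpow _ hα, ennreal_iSup_rpow _ hβ,
    ENNReal.iSup_mul, ENNReal.mul_iSup, iSup_le_iff]
  exact forall_comm

lemma ennreal_coe_rpow_mul_rpow (hα : 0 ≤ α) (hβ : 0 ≤ β) (a b : ℝ≥0) :
    ((a ^ α * b ^ β : ℝ≥0) : ℝ≥0∞) = (a : ℝ≥0∞) ^ α * (b : ℝ≥0∞) ^ β := by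
  rw [ENNReal.coe_mul, ENNReal.coe_rpow_of_nonneg a hα, ENNReal.coe_rpow_of_nonneg b hβ]

lemma rpow_tsum_mul_rpow_tsum_le [LinearOrder G] [IsOrderedAddMonoid G] {T : G → G → G}
    (hα : 0 < α) (hβ : 0 < β) (hmix : max α β ≤ min γ δ) (hT : TranslationEquivariant T)
    (hm : Monotone (Function.uncurry T)) {f g h k : G → ℝ≥0} (hh : Summable h) (hk : Summable k)
    (hyp : ∀ x y, f x ^ α * g y ^ β ≤ h (T x y) ^ γ * k (x + y - T x y) ^ δ) :
    (∑' x, (f x : ℝ≥0∞)) ^ α * (∑' x, (g x : ℝ≥0∞)) ^ β ≤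
      (∑' x, (h x : ℝ≥0∞)) ^ γ * (∑' x, (k x : ℝ≥0∞)) ^ δ := by
  obtain ⟨hγ, hδ⟩ := pos_and_pos_of_max_le_min hα hmix
  refine (rpow_tsum_mul_rpow_tsum_le_iff hα hβ).2 fun s t ↦ ?_
  rw [← ENNReal.coe_tsum hh, ← ENNReal.coe_tsum hk, ← ENNReal.ofNNReal_finsetSum,
    ← ENNReal.ofNNReal_finsetSum, ← ennreal_coe_rpow_mul_rpow hα.le hβ.le,
    ← ennreal_coe_rpow_mul_rpow hγ.le hδ.le, ENNReal.coe_le_coe]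
  exact rpow_sum_mul_rpow_sum_le hα hβ hmix hT hm hh hk hyp s t

lemma ne_top_of_rpow_mul_ne_top {a c : ℝ≥0∞} (hα : 0 < α) (hc : c ≠ 0) (h : a ^ α * c ≠ ∞) :
    a ≠ ∞ := by
  rintro rfl
  rw [ENNReal.top_rpow_of_pos hα, ENNReal.top_mul hc] at h
  exact h rfl

lemma satisfiesBrunnMinkowski_of_monotone [LinearOrder G] [IsOrderedAddMonoid G] {T : G → G → G}
    (hα : 0 < α) (hβ : 0 < β) (hmix : max α β ≤ min γ δ) (hT : TranslationEquivariant T)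
    (hm : Monotone (Function.uncurry T)) : SatisfiesBrunnMinkowski α β γ δ T := by
  intro f g h k hyp
  obtain ⟨hγ, hδ⟩ := pos_and_pos_of_max_le_min hα hmix
  set R := (∑' x, h x) ^ γ * (∑' x, k x) ^ δ
  have pointwise_le : ∀ x y, f x ^ α * g y ^ β ≤ R := fun x y ↦ (hyp x y).trans <|
    mul_le_mul' (ENNReal.rpow_le_rpow (ENNReal.le_tsum _) hγ.le)
      (ENNReal.rpow_le_rpow (ENNReal.le_tsum _) hδ.le)
  rcases eq_or_ne R ∞ with hR | hR
  · exact hR ▸ le_top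
  by_cases hf : f = 0
  · simp [hf, hα]
  by_cases hg : g = 0
  · simp [hg, hβ]
  obtain ⟨x₀, hx₀⟩ := Function.ne_iff.1 hf
  obtain ⟨y₀, hy₀⟩ := Function.ne_iff.1 hg
  have hfα : f x₀ ^ α ≠ 0 := (ENNReal.rpow_eq_zero_iff_of_pos hα).not.2 hx₀
  have hgβ : g y₀ ^ β ≠ 0 := (ENNReal.rpow_eq_zero_iff_of_pos hβ).not.2 hy₀
  obtain ⟨hHγ, hKδ⟩ : (∑' x, h x) ^ γ ≠ 0 ∧ (∑' x, k x) ^ δ ≠ 0 := mul_ne_zero_iff.1 <|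
    ((pos_iff_ne_zero.2 (mul_ne_zero hfα hgβ)).trans_le (pointwise_le x₀ y₀)).ne'
  have hf_top : ∀ x, f x ≠ ∞ := fun x ↦
    ne_top_of_rpow_mul_ne_top hα hgβ (ne_top_of_le_ne_top hR (pointwise_le x y₀))
  have hg_top : ∀ y, g y ≠ ∞ := fun y ↦
    ne_top_of_rpow_mul_ne_top hβ hfα (mul_comm (f x₀ ^ α) _ ▸
      ne_top_of_le_ne_top hR (pointwise_le x₀ y))
  have hH : ∑' x, h x ≠ ∞ := ne_top_of_rpow_mul_ne_top hγ hKδ hR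
  have hK : ∑' x, k x ≠ ∞ := ne_top_of_rpow_mul_ne_top hδ hHγ (by rwa [mul_comm])
  lift f to G → ℝ≥0 using hf_top
  lift g to G → ℝ≥0 using hg_top
  lift h to G → ℝ≥0 using ENNReal.ne_top_of_tsum_ne_top hH
  lift k to G → ℝ≥0 using ENNReal.ne_top_of_tsum_ne_top hK
  rw [ENNReal.tsum_coe_ne_top_iff_summable] at hH hK
  simp only [← ennreal_coe_rpow_mul_rpow hα.le hβ.le, ← ennreal_coe_rpow_mul_rpow hγ.le hδ.le,
    ENNReal.coe_le_coe] at hyp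
  exact rpow_tsum_mul_rpow_tsum_le hα hβ hmix hT hm hH hK hyp

lemma TotalAdditiveOrdering.satisfiesBrunnMinkowski {r : G → G → Prop}
    (hr : TotalAdditiveOrdering r) {T : G → G → G} (hα : 0 < α) (hβ : 0 < β)
    (hmix : max α β ≤ min γ δ) (hT : TranslationEquivariant T)
    (hm : ∀ x y x' y', r x x' → r y y' → r (T x y) (T x' y')) :
    SatisfiesBrunnMinkowski α β γ δ T := by
  obtain ⟨refl, antisymm, trans, total, add_right⟩ := hr
  let _ : LinearOrder G :=
    { le := r
      le_refl := refl
      le_trans := trans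
      le_antisymm := antisymm
      le_total := total
      toDecidableLE := Classical.decRel _ }
  have : IsOrderedAddMonoid G := { add_le_add_left := fun a b hab c ↦ add_right a b c hab }
  exact satisfiesBrunnMinkowski_of_monotone hα hβ hmix hT fun z z' hz ↦ hm _ _ _ _ hz.1 hz.2

namespace SatisfiesBrunnMinkowski

lemma of_subsingleton [Subsingleton G] (T : G → G → G) : SatisfiesBrunnMinkowski α β γ δ T := by
  intro f g h k hyp
  have tsum_eq : ∀ q : G → ℝ≥0∞, ∑' x, q x = q 0 := fun q ↦
    tsum_eq_single 0 fun x hx ↦ (hx (Subsingleton.elim x 0)).elim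
  simpa only [tsum_eq, Subsingleton.elim (_ : G) 0] using hyp 0 0

lemma of_conjugate (e : G ≃+ H) {T : G → G → G}
    (hT : SatisfiesBrunnMinkowski α β γ δ fun x y ↦ e (T (e.symm x) (e.symm y))) :
    SatisfiesBrunnMinkowski α β γ δ T := by
  intro f g h k hyp
  have tsum_symm : ∀ q : G → ℝ≥0∞, ∑' x, q (e.symm x) = ∑' x, q x := e.symm.toEquiv.tsum_eq
  rw [← tsum_symm f, ← tsum_symm g, ← tsum_symm h, ← tsum_symm k]
  refine hT _ _ _ _ fun x y ↦ ?_
  simpa only [map_sub, map_add, e.symm_apply_apply] using hyp (e.symm x) (e.symm y)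

lemma prod {T : G × H → G × H → G × H} {T₀ : G → G → G}
    (h₀ : SatisfiesBrunnMinkowski α β γ δ T₀) (hT : ∀ x y, (T x y).1 = T₀ x.1 y.1)
    (h₁ : ∀ a b, SatisfiesBrunnMinkowski α β γ δ fun u v ↦ (T (a, u) (b, v)).2) :
    SatisfiesBrunnMinkowski α β γ δ T := by
  intro f g h k hyp
  simp only [ENNReal.tsum_prod']
  refine h₀ _ _ _ _ fun a b ↦ h₁ a b _ _ _ _ fun u v ↦ ?_
  have T_eq : T (a, u) (b, v) = (T₀ a b, (T (a, u) (b, v)).2) := Prod.ext (hT _ _) rfl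
  have key := hyp (a, u) (b, v)
  rw [T_eq] at key
  exact key

end SatisfiesBrunnMinkowski

/-- `T` is triangular, and nondecreasing within each block, for the block decomposition
`∀ i, A i` and the orderings `r i`: the content of `KnotheWith`, for blocks that are arbitrary
abelian groups. -/
structure IsKnothe {m : ℕ} {A : Fin m → Type*} (r : ∀ i, A i → A i → Prop)
    (T : (∀ i, A i) → (∀ i, A i) → ∀ i, A i) : Prop where
  triangular : ∀ i x y x' y', (∀ j ≤ i, x j = x' j ∧ y j = y' j) → T x y i = T x' y' i
  monotone : ∀ i x y x' y', (∀ j < i, x j = x' j ∧ y j = y' j) → r i (x i) (x' i) →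
    r i (y i) (y' i) → r i (T x y i) (T x' y' i)

lemma KnotheWith.isKnothe {n m : ℕ} {ℓ : Fin m → ℕ} {e : (Fin n → ℤ) ≃+ (∀ i, Fin (ℓ i) → ℤ)}
    {ord : ∀ i, (Fin (ℓ i) → ℤ) → (Fin (ℓ i) → ℤ) → Prop}
    {T : (Fin n → ℤ) → (Fin n → ℤ) → Fin n → ℤ} (hT : KnotheWith ℓ e ord T) :
    IsKnothe ord fun x y ↦ e (T (e.symm x) (e.symm y)) where
  triangular i x y x' y' h := hT.1 i _ _ _ _ (by simpa only [e.apply_symm_apply] using h)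
  monotone i x y x' y' h hx hy := hT.2 i _ _ _ _ (by simpa only [e.apply_symm_apply] using h)
    (by simpa only [e.apply_symm_apply] using hx) (by simpa only [e.apply_symm_apply] using hy)

namespace IsKnothe

variable {m : ℕ} {A : Fin (m + 1) → Type*} {r : ∀ i, A i → A i → Prop}
  {T : (∀ i, A i) → (∀ i, A i) → ∀ i, A i}

lemma head_congr (hT : IsKnothe r T) {x y x' y' : ∀ i, A i} (hx : x 0 = x' 0) (hy : y 0 = y' 0) :
    T x y 0 = T x' y' 0 :=
  hT.triangular 0 _ _ _ _ fun j hj ↦ by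
    obtain rfl := Fin.le_zero_iff.1 hj
    exact ⟨hx, hy⟩

lemma head_monotone (hT : IsKnothe r T) {x y x' y' : ∀ i, A i} (hx : r 0 (x 0) (x' 0))
    (hy : r 0 (y 0) (y' 0)) : r 0 (T x y 0) (T x' y' 0) :=
  hT.monotone 0 _ _ _ _ (fun j hj ↦ (Fin.not_lt_zero j hj).elim) hx hy

lemma tail (hT : IsKnothe r T) (a b : A 0) :
    IsKnothe (fun i ↦ r i.succ) fun u v ↦ Fin.tail (T (Fin.cons a u) (Fin.cons b v)) where
  triangular i _ _ _ _ h := hT.triangular i.succ _ _ _ _ <|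
    Fin.cases (fun _ ↦ ⟨rfl, rfl⟩) fun j hj ↦ h j (Fin.succ_le_succ_iff.1 hj)
  monotone i _ _ _ _ h hu hv := hT.monotone i.succ _ _ _ _
    (Fin.cases (fun _ ↦ ⟨rfl, rfl⟩) fun j hj ↦ h j (Fin.succ_lt_succ_iff.1 hj)) hu hv

end IsKnothe

namespace TranslationEquivariant

lemma conjugate (e : G ≃+ H) {T : G → G → G} (hT : TranslationEquivariant T) :
    TranslationEquivariant fun x y ↦ e (T (e.symm x) (e.symm y)) := by
  intro x y z
  simp only [map_add, hT _ _ _, e.apply_symm_apply]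

variable {m : ℕ} {A : Fin (m + 1) → Type*} [∀ i, AddCommGroup (A i)]
  {T : (∀ i, A i) → (∀ i, A i) → ∀ i, A i}

lemma head (hT : TranslationEquivariant T) :
    TranslationEquivariant fun a b ↦ T (Fin.cons a 0) (Fin.cons b 0) 0 := by
  intro a b c
  have cons_add : ∀ d : A 0, (Fin.cons (d + c) 0 : ∀ i, A i) = Fin.cons d 0 + Fin.cons c 0 :=
    fun d ↦ funext <| Fin.cases rfl fun i ↦ (add_zero 0).symm
  simp only [cons_add, hT _ _ _, Pi.add_apply, Fin.cons_zero]

lemma tail (hT : TranslationEquivariant T) (a b : A 0) :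
    TranslationEquivariant fun u v ↦ Fin.tail (T (Fin.cons a u) (Fin.cons b v)) := by
  intro u v w
  have cons_add : ∀ (d : A 0) u, (Fin.cons d (u + w) : ∀ i, A i) = Fin.cons d u + Fin.cons 0 w :=
    fun d u ↦ funext <| Fin.cases (add_zero d).symm fun i ↦ rfl
  simp only [cons_add, hT _ _ _]
  rfl

end TranslationEquivariant

lemma IsKnothe.satisfiesBrunnMinkowski {m : ℕ} {A : Fin m → Type*} [∀ i, AddCommGroup (A i)]
    {r : ∀ i, A i → A i → Prop} {T : (∀ i, A i) → (∀ i, A i) → ∀ i, A i} (hT : IsKnothe r T)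
    (hr : ∀ i, TotalAdditiveOrdering (r i)) (hα : 0 < α) (hβ : 0 < β)
    (hmix : max α β ≤ min γ δ) (hTE : TranslationEquivariant T) :
    SatisfiesBrunnMinkowski α β γ δ T := by
  induction m with
  | zero => exact .of_subsingleton T
  | succ m ih =>
    refine .of_conjugate (Fin.consLinearEquiv ℤ A).toAddEquiv.symm (.prod
      ((hr 0).satisfiesBrunnMinkowski hα hβ hmix hTE.head fun _ _ _ _ hx hy ↦
        hT.head_monotone hx hy)
      (fun x y ↦ hT.head_congr rfl rfl)
      fun a b ↦ ih (hT.tail a b) (fun i ↦ hr i.succ) (hTE.tail a b))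

theorem weighted_discrete_brunn_minkowski_general {m : ℕ} {A : Fin m → Type*}
    [∀ i, AddCommGroup (A i)] (e : G ≃+ ∀ i, A i) {r : ∀ i, A i → A i → Prop}
    (hr : ∀ i, TotalAdditiveOrdering (r i)) (hα : 0 < α) (hβ : 0 < β)
    (hmix : max α β ≤ min γ δ) {T : G → G → G} (hTE : TranslationEquivariant T)
    (hT : IsKnothe r fun x y ↦ e (T (e.symm x) (e.symm y))) {f g h k : G → ℝ≥0∞}
    (hyp : ∀ x y, f x ^ α * g y ^ β ≤ h (T x y) ^ γ * k (x + y - T x y) ^ δ) :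
    (∑' x, f x) ^ α * (∑' x, g x) ^ β ≤ (∑' x, h x) ^ γ * (∑' x, k x) ^ δ :=
  SatisfiesBrunnMinkowski.of_conjugate e
    (hT.satisfiesBrunnMinkowski hr hα hβ hmix (hTE.conjugate e)) f g h k hyp

end BrunnMinkowski

/-- **Weighted discrete Brunn–Minkowski inequality** for translation equivariant operations
that are monotone in the sense of Knothe. -/
theorem weighted_discrete_brunn_minkowski {n : ℕ} (hn : 1 ≤ n) (α β γ δ : ℝ)
    (hα : 0 < α) (hβ : 0 < β) (hγ : 0 < γ) (hδ : 0 < δ)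
    (hmix : max α β ≤ min γ δ)
    (T : (Fin n → ℤ) → (Fin n → ℤ) → (Fin n → ℤ))
    (hTE : TranslationEquivariant T) (hT : KnotheMonotone T)
    (f g h k : (Fin n → ℤ) → ℝ≥0)
    (hyp : ∀ x y, f x ^ α * g y ^ β ≤ h (T x y) ^ γ * k (x + y - T x y) ^ δ) :
    (∑' x, (f x : ℝ≥0∞)) ^ α * (∑' x, (g x : ℝ≥0∞)) ^ β ≤
      (∑' x, (h x : ℝ≥0∞)) ^ γ * (∑' x, (k x : ℝ≥0∞)) ^ δ := by
  obtain ⟨_, -, _, -, e, _, hord, hT⟩ := hT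
  exact weighted_discrete_brunn_minkowski_general e (fun i ↦ (hord i).1) hα hβ hmix hTE hT.isKnothe
    fun x y ↦ by
      simpa only [ennreal_coe_rpow_mul_rpow hα.le hβ.le, ennreal_coe_rpow_mul_rpow hγ.le hδ.le]
        using ENNReal.coe_le_coe.2 (hyp x y)
end

section
/- Let α, β, γ, δ > 0 with max{α,β} ≤ min{γ,δ}, and let n ≥ 1. Suppose f, g, h, k : ℤⁿ → [0,∞) satisfy f(x)^α · g(y)^β ≤ h(⌊(x+y)/2⌋)^γ · k(⌈(x+y)/2⌉)^δ for all x, y ∈ ℤⁿ, where ⌊·⌋ and ⌈·⌉ are applied coordinatewise. Then (∑_{x∈ℤⁿ} f(x))^α · (∑_{x∈ℤⁿ} g(x))^β ≤ (∑_{x∈ℤⁿ} h(x))^γ · (∑_{x∈ℤⁿ} k(x))^δ, where the sums are taken in the extended nonnegative reals [0,∞]. -/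
open scoped BigOperators ENNReal NNReal

/-!
The weights are removed by raising everything to the power `1 / max α β`: the map `t ↦ t ^ p` is
subadditive for `p ≤ 1` and superadditive for `p ≥ 1`, so the functions on the left only gain and
those on the right only lose. The unweighted inequality tensorizes, which leaves dimension one. For
finite sums on `ℕ` one inducts on the total number of terms: splitting off the first term of each of
the four functions, the cases where the first term of `f`, of `g`, or of both is removed satisfy the
same hypothesis after a shift (removing only one of them exchanges the roles of `h` and `k`), and
these cases together imply the inequality for the whole sums.
-/

section FourSums

variable {R : Type*} [CommSemiring R] [LinearOrder R] [IsStrictOrderedRing R]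
  [CanonicallyOrderedAdd R] {f₀ f₁ g₀ g₁ h₀ h₁ k₀ k₁ : R}

theorem add_mul_add_le_of_mul_le_mul (h₀₀ : f₀ * g₀ ≤ h₀ * k₀)
    (hf : (f₀ + f₁) * g₁ ≤ (h₀ + h₁) * k₁) (hg : f₁ * (g₀ + g₁) ≤ (h₀ + h₁) * k₁)
    (hle : h₀ * f₁ ≤ f₀ * h₁) :
    (f₀ + f₁) * (g₀ + g₁) ≤ (h₀ + h₁) * (k₀ + k₁) := by
  rcases eq_or_ne f₀ 0 with rfl | hf₀
  · calc (0 + f₁) * (g₀ + g₁) = f₁ * (g₀ + g₁) := by rw [zero_add]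
      _ ≤ (h₀ + h₁) * k₁ := hg
      _ ≤ (h₀ + h₁) * (k₀ + k₁) := by gcongr; exact le_add_self
  have hk₀ : (f₀ + f₁) * g₀ ≤ (h₀ + h₁) * k₀ := by
    refine le_of_mul_le_mul_left ?_ (pos_of_ne_zero hf₀)
    calc f₀ * ((f₀ + f₁) * g₀) = (f₀ + f₁) * (f₀ * g₀) := by ring
      _ ≤ (f₀ + f₁) * (h₀ * k₀) := by gcongr
      _ = (f₀ * h₀ + h₀ * f₁) * k₀ := by ring
      _ ≤ (f₀ * h₀ + f₀ * h₁) * k₀ := by gcongr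
      _ = f₀ * ((h₀ + h₁) * k₀) := by ring
  calc (f₀ + f₁) * (g₀ + g₁) = (f₀ + f₁) * g₀ + (f₀ + f₁) * g₁ := mul_add ..
    _ ≤ (h₀ + h₁) * k₀ + (h₀ + h₁) * k₁ := add_le_add hk₀ hf
    _ = (h₀ + h₁) * (k₀ + k₁) := (mul_add ..).symm

theorem add_mul_add_le_of_mul_lt_mul (h₀₀ : f₀ * g₀ ≤ h₀ * k₀) (h₁₁ : f₁ * g₁ ≤ h₁ * k₁)
    (hf : f₀ * h₁ < h₀ * f₁) (hg : g₀ * h₁ < h₀ * g₁) :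
    (f₀ + f₁) * (g₀ + g₁) ≤ (h₀ + h₁) * (k₀ + k₁) := by
  have hh₀ : h₀ ≠ 0 := left_ne_zero_of_mul (pos_of_gt hf).ne'
  have hh₁ : h₁ ≠ 0 := left_ne_zero_of_mul <| ne_of_gt <| h₁₁.trans_lt' <| pos_of_ne_zero <|
    mul_ne_zero (right_ne_zero_of_mul (pos_of_gt hf).ne') (right_ne_zero_of_mul (pos_of_gt hg).ne')
  have rearrangement : (f₀ * h₁) * (h₀ * g₁) + (h₀ * f₁) * (g₀ * h₁) ≤
      (f₀ * h₁) * (g₀ * h₁) + (h₀ * f₁) * (h₀ * g₁) :=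
    mul_add_mul_le_mul_add_mul hf.le hg.le
  refine le_of_mul_le_mul_left ?_ (pos_of_ne_zero (mul_ne_zero hh₀ hh₁))
  calc h₀ * h₁ * ((f₀ + f₁) * (g₀ + g₁))
      = h₀ * h₁ * (f₀ * g₀ + f₁ * g₁) +
          ((f₀ * h₁) * (h₀ * g₁) + (h₀ * f₁) * (g₀ * h₁)) := by ring
    _ ≤ h₀ * h₁ * (f₀ * g₀ + f₁ * g₁) +
          ((f₀ * h₁) * (g₀ * h₁) + (h₀ * f₁) * (h₀ * g₁)) := by gcongr
    _ = (h₀ + h₁) * ((f₀ * g₀) * h₁ + h₀ * (f₁ * g₁)) := by ring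
    _ ≤ (h₀ + h₁) * ((h₀ * k₀) * h₁ + h₀ * (h₁ * k₁)) := by gcongr
    _ = h₀ * h₁ * ((h₀ + h₁) * (k₀ + k₁)) := by ring

/- With `a = f₀ / (f₀ + f₁)`, `b = g₀ / (g₀ + g₁)` and `t = h₀ / (h₀ + h₁)`, the first two cases are
`t ≤ a` and `t ≤ b`. In the remaining one it suffices that `a * b / t + (1 - a) * (1 - b) / (1 - t)`
is at least `1`, which amounts to `0 ≤ (t - a) * (t - b)`. -/
theorem add_mul_add_le_add_mul_add (h₀₀ : f₀ * g₀ ≤ h₀ * k₀) (h₁₁ : f₁ * g₁ ≤ h₁ * k₁)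
    (hf : (f₀ + f₁) * g₁ ≤ (h₀ + h₁) * k₁) (hg : f₁ * (g₀ + g₁) ≤ (h₀ + h₁) * k₁) :
    (f₀ + f₁) * (g₀ + g₁) ≤ (h₀ + h₁) * (k₀ + k₁) := by
  rcases le_or_gt (h₀ * f₁) (f₀ * h₁) with hle | hltf
  · exact add_mul_add_le_of_mul_le_mul h₀₀ hf hg hle
  rcases le_or_gt (h₀ * g₁) (g₀ * h₁) with hle | hltg
  · rw [mul_comm] at h₀₀ hf hg ⊢
    exact add_mul_add_le_of_mul_le_mul h₀₀ hg hf hle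
  · exact add_mul_add_le_of_mul_lt_mul h₀₀ h₁₁ hltf hltg

theorem sum_range_mul_sum_range_le_of_midpoint (N M : ℕ) (f g h k : ℕ → R)
    (hyp : ∀ i j, f i * g j ≤ h ((i + j) / 2) * k ((i + j + 1) / 2)) :
    (∑ i ∈ Finset.range N, f i) * ∑ j ∈ Finset.range M, g j ≤
      (∑ i ∈ Finset.range ((N + M) / 2), h i) * ∑ j ∈ Finset.range ((N + M + 1) / 2), k j := by
  match N, M with
  | 0, _ => simp
  | _, 0 => simp
  | N + 1, M + 1 =>
    have split (φ : ℕ → R) (L : ℕ) : ∑ i ∈ Finset.range (L + 1), φ i =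
        φ 0 + ∑ i ∈ Finset.range L, φ (i + 1) := by
      rw [Finset.sum_range_succ', add_comm]
    have hN : (N + 1 + (M + 1)) / 2 = (N + M) / 2 + 1 := by lia
    have hM : (N + 1 + (M + 1) + 1) / 2 = (N + M + 1) / 2 + 1 := by lia
    rw [hN, hM, split f, split g, split h, split k]
    apply add_mul_add_le_add_mul_add
    · exact hyp 0 0
    · refine sum_range_mul_sum_range_le_of_midpoint N M _ _ _ _ fun i j => ?_
      convert hyp (i + 1) (j + 1) using 3 <;> lia
    · rw [← split f, ← split h, mul_comm (∑ i ∈ Finset.range ((N + M) / 2 + 1), h i)]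
      convert sum_range_mul_sum_range_le_of_midpoint (N + 1) M f (g <| · + 1) (k <| · + 1) h
        fun i j => ?_ using 4
      · lia
      · lia
      · rw [mul_comm (k _)]
        convert hyp i (j + 1) using 3 <;> lia
    · rw [← split g, ← split h, mul_comm (∑ i ∈ Finset.range ((N + M) / 2 + 1), h i)]
      convert sum_range_mul_sum_range_le_of_midpoint N (M + 1) (f <| · + 1) g (k <| · + 1) h
        fun i j => ?_ using 4
      · lia
      · lia
      · rw [mul_comm (k _)]
        convert hyp (i + 1) j using 3 <;> lia
termination_by N + M

end FourSums

section RpowTsum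

variable {ι : Type*} (f : ι → ℝ≥0∞) {p : ℝ}

theorem rpow_tsum_le_tsum_rpow (hp : 0 < p) (hp1 : p ≤ 1) : (∑' i, f i) ^ p ≤ ∑' i, f i ^ p := by
  rw [← ENNReal.le_rpow_inv_iff hp, ENNReal.tsum_eq_iSup_sum]
  refine iSup_le fun s => ?_
  rw [ENNReal.le_rpow_inv_iff hp]
  calc (∑ i ∈ s, f i) ^ p ≤ ∑ i ∈ s, f i ^ p :=
        Finset.le_sum_of_subadditive (· ^ p) (ENNReal.zero_rpow_of_pos hp).le
          (fun a b => ENNReal.rpow_add_le_add_rpow a b hp.le hp1) s f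
    _ ≤ ∑' i, f i ^ p := ENNReal.sum_le_tsum s

theorem tsum_rpow_le_rpow_tsum (hp : 1 ≤ p) : ∑' i, f i ^ p ≤ (∑' i, f i) ^ p := by
  have hp0 : 0 < p := zero_lt_one.trans_le hp
  rw [← ENNReal.rpow_inv_le_iff hp0]
  calc (∑' i, f i ^ p) ^ p⁻¹ ≤ ∑' i, (f i ^ p) ^ p⁻¹ :=
        rpow_tsum_le_tsum_rpow _ (inv_pos.2 hp0) (inv_le_one_of_one_le₀ hp)
    _ = ∑' i, f i := by simp only [ENNReal.rpow_rpow_inv hp0.ne']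

end RpowTsum

/-- The discrete Brunn–Minkowski inequality, in its functional form (four functions with values in
`[0, ∞]`), for a pair of binary operations on `A`. Klartag and Lehec treat an operation `T` on `ℤⁿ`
together with its complement `x + y - T x y`; keeping the two operations independent avoids
any algebraic structure on `A`. -/
def IsFourFunctionPair {A : Type*} (T T' : A → A → A) : Prop :=
  ∀ f g h k : A → ℝ≥0∞, (∀ x y, f x * g y ≤ h (T x y) * k (T' x y)) →
    (∑' x, f x) * ∑' x, g x ≤ (∑' x, h x) * ∑' x, k x

namespace IsFourFunctionPair

variable {A B : Type*} {T T' : A → A → A} {U U' : B → B → B}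

theorem of_nnreal
    (H : ∀ f g h k : A → ℝ≥0, (∀ x y, f x * g y ≤ h (T x y) * k (T' x y)) →
      (∑' x, (f x : ℝ≥0∞)) * ∑' x, (g x : ℝ≥0∞) ≤
        (∑' x, (h x : ℝ≥0∞)) * ∑' x, (k x : ℝ≥0∞)) :
    IsFourFunctionPair T T' := by
  intro f g h k hyp
  by_contra! hlt
  obtain ⟨hf_tsum, hg_tsum⟩ := mul_ne_zero_iff.1 hlt.ne_bot
  obtain ⟨x₀, hx₀⟩ : ∃ x, f x ≠ 0 := by simpa using hf_tsum
  obtain ⟨y₀, hy₀⟩ : ∃ y, g y ≠ 0 := by simpa using hg_tsum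
  obtain ⟨hh₀, hk₀⟩ : h (T x₀ y₀) ≠ 0 ∧ k (T' x₀ y₀) ≠ 0 :=
    mul_ne_zero_iff.1 ((pos_of_ne_zero (mul_ne_zero hx₀ hy₀)).trans_le (hyp x₀ y₀)).ne'
  have hh (x) : h x ≠ ∞ := ENNReal.ne_top_of_tsum_ne_top
    (fun htop => hlt.ne_top <| by
      rw [htop, ENNReal.top_mul (mt ENNReal.tsum_eq_zero.1 fun hzero => hk₀ (hzero _))]) x
  have hk (x) : k x ≠ ∞ := ENNReal.ne_top_of_tsum_ne_top
    (fun htop => hlt.ne_top <| by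
      rw [htop, ENNReal.mul_top (mt ENNReal.tsum_eq_zero.1 fun hzero => hh₀ (hzero _))]) x
  have hfg (x y) : f x * g y ≠ ∞ := ne_top_of_le_ne_top (ENNReal.mul_ne_top (hh _) (hk _)) (hyp x y)
  have hf (x) : f x ≠ ∞ := fun htop => hfg x y₀ (by rw [htop, ENNReal.top_mul hy₀])
  have hg (y) : g y ≠ ∞ := fun htop => hfg x₀ y (by rw [htop, ENNReal.mul_top hx₀])
  lift f to A → ℝ≥0 using hf
  lift g to A → ℝ≥0 using hg
  lift h to A → ℝ≥0 using hh
  lift k to A → ℝ≥0 using hk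
  refine hlt.not_ge (H f g h k fun x y => ?_)
  simpa only [← ENNReal.coe_mul, ENNReal.coe_le_coe] using hyp x y

theorem of_subsingleton [Subsingleton A] : IsFourFunctionPair T T' := by
  intro f g h k hyp
  rcases isEmpty_or_nonempty A with _ | ⟨⟨a⟩⟩
  · simp
  · have tsum_eq (φ : A → ℝ≥0∞) : ∑' x, φ x = φ a :=
      tsum_eq_single a fun b hb => (hb (Subsingleton.elim b a)).elim
    simp only [tsum_eq]
    convert hyp a a

theorem of_equiv (hU : IsFourFunctionPair U U') (e : A ≃ B) (hT : ∀ x y, e (T x y) = U (e x) (e y))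
    (hT' : ∀ x y, e (T' x y) = U' (e x) (e y)) : IsFourFunctionPair T T' := by
  intro f g h k hyp
  simp only [← e.symm.tsum_eq]
  refine hU _ _ _ _ (e.surjective.forall₂.2 fun x y => ?_)
  simpa only [← hT, ← hT', e.symm_apply_apply] using hyp x y

theorem prod (hT : IsFourFunctionPair T T') (hU : IsFourFunctionPair U U') :
    IsFourFunctionPair (fun x y : A × B => (T x.1 y.1, U x.2 y.2))
      (fun x y => (T' x.1 y.1, U' x.2 y.2)) := by
  intro f g h k hyp
  simp only [ENNReal.tsum_prod']
  exact hT _ _ _ _ fun a a' => hU _ _ _ _ fun b b' => hyp (a, b) (a', b')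

theorem pi {ι : Type*} [Finite ι] (hT : IsFourFunctionPair T T') :
    IsFourFunctionPair (fun (x y : ι → A) i => T (x i) (y i)) (fun x y i => T' (x i) (y i)) := by
  induction ι using Finite.induction_empty_option with
  | of_equiv e ih =>
    exact ih.of_equiv (e.arrowCongr (Equiv.refl A)).symm (fun _ _ => rfl) fun _ _ => rfl
  | h_empty => exact of_subsingleton
  | h_option ih =>
    exact (hT.prod ih).of_equiv Equiv.piOptionEquivProd (fun _ _ => rfl) fun _ _ => rfl

theorem rpow_tsum_mul_rpow_tsum_le (hT : IsFourFunctionPair T T') {α β γ δ : ℝ} (hα : 0 < α)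
    (hβ : 0 < β) (hmix : max α β ≤ min γ δ) {f g h k : A → ℝ≥0∞}
    (hyp : ∀ x y, f x ^ α * g y ^ β ≤ h (T x y) ^ γ * k (T' x y) ^ δ) :
    (∑' x, f x) ^ α * (∑' x, g x) ^ β ≤ (∑' x, h x) ^ γ * (∑' x, k x) ^ δ := by
  set m := max α β
  have hm : 0 < m := lt_max_of_lt_left hα
  obtain ⟨hγ, hδ⟩ : m ≤ γ ∧ m ≤ δ := le_min_iff.1 hmix
  have unweighted : (∑' x, f x ^ (α / m)) * ∑' x, g x ^ (β / m) ≤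
      (∑' x, h x ^ (γ / m)) * ∑' x, k x ^ (δ / m) := by
    refine hT _ _ _ _ fun x y => ?_
    simpa only [ENNReal.mul_rpow_of_nonneg _ _ (inv_nonneg.2 hm.le), ← ENNReal.rpow_mul,
      ← div_eq_mul_inv] using ENNReal.rpow_le_rpow (hyp x y) (inv_nonneg.2 hm.le)
  have rpow_eq (S : ℝ≥0∞) (p : ℝ) : S ^ p = (S ^ (p / m)) ^ m := by
    rw [← ENNReal.rpow_mul, div_mul_cancel₀ _ hm.ne']
  rw [rpow_eq _ α, rpow_eq _ β, rpow_eq _ γ, rpow_eq _ δ, ← ENNReal.mul_rpow_of_nonneg _ _ hm.le,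
    ← ENNReal.mul_rpow_of_nonneg _ _ hm.le]
  refine ENNReal.rpow_le_rpow ?_ hm.le
  calc (∑' x, f x) ^ (α / m) * (∑' x, g x) ^ (β / m)
      ≤ (∑' x, f x ^ (α / m)) * ∑' x, g x ^ (β / m) :=
        mul_le_mul' (rpow_tsum_le_tsum_rpow _ (div_pos hα hm) ((div_le_one hm).2 (le_max_left ..)))
          (rpow_tsum_le_tsum_rpow _ (div_pos hβ hm) ((div_le_one hm).2 (le_max_right ..)))
    _ ≤ (∑' x, h x ^ (γ / m)) * ∑' x, k x ^ (δ / m) := unweighted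
    _ ≤ (∑' x, h x) ^ (γ / m) * (∑' x, k x) ^ (δ / m) :=
        mul_le_mul' (tsum_rpow_le_rpow_tsum _ ((one_le_div hm).2 hγ))
          (tsum_rpow_le_rpow_tsum _ ((one_le_div hm).2 hδ))

end IsFourFunctionPair

theorem floor_intCast_div_two (a : ℤ) : ⌊(a : ℚ) / 2⌋ = a / 2 :=
  mod_cast Rat.floor_intCast_div_natCast a 2

theorem ceil_intCast_div_two (a : ℤ) : ⌈(a : ℚ) / 2⌉ = (a + 1) / 2 := by
  have hneg : ⌈(a : ℚ) / 2⌉ = -(-a / 2) := mod_cast Rat.ceil_intCast_div_natCast a 2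
  lia

theorem sum_Ico_neg_eq_sum_range {M : Type*} [AddCommMonoid M] (φ : ℤ → M) (N : ℕ) :
    ∑ x ∈ Finset.Ico (-N : ℤ) N, φ x = ∑ i ∈ Finset.range (2 * N), φ (i - N) := by
  have hcard : ((N : ℤ) - -N).toNat = 2 * N := by lia
  rw [Int.Ico_eq_finset_map, Finset.sum_map, hcard]
  exact Finset.sum_congr rfl fun i _ => congrArg φ (neg_add_eq_sub ..)

theorem exists_subset_Ico_neg (s : Finset ℤ) : ∃ N : ℕ, s ⊆ Finset.Ico (-N : ℤ) N := by
  refine ⟨s.sup Int.natAbs + 1, fun x hx => Finset.mem_Ico.2 ?_⟩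
  have : x.natAbs ≤ s.sup Int.natAbs := Finset.le_sup hx
  lia

theorem sum_mul_sum_le_tsum_mul_tsum_of_int_midpoint (f g h k : ℤ → ℝ≥0)
    (hyp : ∀ x y, f x * g y ≤ h ((x + y) / 2) * k ((x + y + 1) / 2)) (s t : Finset ℤ) :
    (∑ x ∈ s, (f x : ℝ≥0∞)) * ∑ x ∈ t, (g x : ℝ≥0∞) ≤
      (∑' x, (h x : ℝ≥0∞)) * ∑' x, (k x : ℝ≥0∞) := by
  obtain ⟨N, hN⟩ := exists_subset_Ico_neg (s ∪ t)
  have sum_le {u : Finset ℤ} (hu : u ⊆ s ∪ t) (φ : ℤ → ℝ≥0) :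
      ∑ x ∈ u, (φ x : ℝ≥0∞) ≤ ∑ i ∈ Finset.range (2 * N), (φ (i - N) : ℝ≥0∞) := by
    rw [← sum_Ico_neg_eq_sum_range (fun x => (φ x : ℝ≥0∞))]
    exact Finset.sum_le_sum_of_subset (hu.trans hN)
  have sum_range_le (φ : ℤ → ℝ≥0) (L : ℕ) :
      ∑ i ∈ Finset.range L, (φ (i - N) : ℝ≥0∞) ≤ ∑' x, (φ x : ℝ≥0∞) :=
    (ENNReal.sum_le_tsum _).trans <|
      ENNReal.tsum_comp_le_tsum_of_injective (sub_left_injective.comp Nat.cast_injective) _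
  have finite_sums := sum_range_mul_sum_range_le_of_midpoint (2 * N) (2 * N)
    (fun i => f (i - N)) (fun i => g (i - N)) (fun i => h (i - N)) (fun i => k (i - N))
    fun i j => by convert hyp (i - N) (j - N) using 3 <;> lia
  calc (∑ x ∈ s, (f x : ℝ≥0∞)) * ∑ x ∈ t, (g x : ℝ≥0∞)
      ≤ (∑ i ∈ Finset.range (2 * N), (f (i - N) : ℝ≥0∞)) *
          ∑ i ∈ Finset.range (2 * N), (g (i - N) : ℝ≥0∞) :=
        mul_le_mul' (sum_le Finset.subset_union_left f) (sum_le Finset.subset_union_right g)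
    _ ≤ (∑ i ∈ Finset.range ((2 * N + 2 * N) / 2), (h (i - N) : ℝ≥0∞)) *
          ∑ i ∈ Finset.range ((2 * N + 2 * N + 1) / 2), (k (i - N) : ℝ≥0∞) :=
        mod_cast finite_sums
    _ ≤ (∑' x, (h x : ℝ≥0∞)) * ∑' x, (k x : ℝ≥0∞) :=
        mul_le_mul' (sum_range_le h _) (sum_range_le k _)

theorem isFourFunctionPair_int_midpoint :
    IsFourFunctionPair (fun x y : ℤ => ⌊((x + y : ℤ) : ℚ) / 2⌋)
      (fun x y => ⌈((x + y : ℤ) : ℚ) / 2⌉) := by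
  simp only [floor_intCast_div_two, ceil_intCast_div_two]
  refine .of_nnreal fun f g h k hyp => ?_
  rw [ENNReal.tsum_eq_iSup_sum, ENNReal.tsum_eq_iSup_sum]
  simp only [ENNReal.iSup_mul, ENNReal.mul_iSup, iSup_le_iff]
  exact fun t s => sum_mul_sum_le_tsum_mul_tsum_of_int_midpoint f g h k hyp s t

theorem weighted_klartag_lehec_general {ι : Type*} [Finite ι] (α β γ δ : ℝ)
    (hα : 0 < α) (hβ : 0 < β) (hmix : max α β ≤ min γ δ)
    (f g h k : (ι → ℤ) → ℝ≥0∞)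
    (hyp : ∀ x y : ι → ℤ,
      f x ^ α * g y ^ β ≤
        h (fun i => ⌊((x i + y i : ℤ) : ℚ) / 2⌋) ^ γ *
          k (fun i => ⌈((x i + y i : ℤ) : ℚ) / 2⌉) ^ δ) :
    (∑' x, f x) ^ α * (∑' x, g x) ^ β ≤ (∑' x, h x) ^ γ * (∑' x, k x) ^ δ :=
  isFourFunctionPair_int_midpoint.pi.rpow_tsum_mul_rpow_tsum_le hα hβ hmix hyp

/-- **Weighted discrete Brunn–Minkowski inequality of Klartag–Lehec type** on `ℤⁿ`, with
the operations `T₋(x,y) = ⌊(x+y)/2⌋` and `T₊(x,y) = ⌈(x+y)/2⌉` taken coordinatewise. -/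
theorem weighted_klartag_lehec {n : ℕ} (hn : 1 ≤ n) (α β γ δ : ℝ)
    (hα : 0 < α) (hβ : 0 < β) (hγ : 0 < γ) (hδ : 0 < δ)
    (hmix : max α β ≤ min γ δ)
    (f g h k : (Fin n → ℤ) → ℝ≥0)
    (hyp : ∀ x y : Fin n → ℤ,
      f x ^ α * g y ^ β ≤
        h (fun i => ⌊((x i + y i : ℤ) : ℚ) / 2⌋) ^ γ *
          k (fun i => ⌈((x i + y i : ℤ) : ℚ) / 2⌉) ^ δ) :
    (∑' x, (f x : ℝ≥0∞)) ^ α * (∑' x, (g x : ℝ≥0∞)) ^ β ≤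
      (∑' x, (h x : ℝ≥0∞)) ^ γ * (∑' x, (k x : ℝ≥0∞)) ^ δ := by
  refine weighted_klartag_lehec_general α β γ δ hα hβ hmix _ _ _ _ fun x y => ?_
  simpa only [ENNReal.coe_rpow_of_nonneg, hα.le, hβ.le, hγ.le, hδ.le, ENNReal.coe_mul]
    using ENNReal.coe_le_coe.2 (hyp x y)
end

section
/- Let α, β, γ, δ > 0 with max{α,β} ≤ min{γ,δ}, and let n ≥ 1. For any finitely supported probability measures μ and ν on ℤⁿ there exists a coupling π of μ and ν such that, with κ₋ the push-forward of π by T₋(x,y) = ⌊(x+y)/2⌋ and κ₊ the push-forward of π by T₊(x,y) = ⌈(x+y)/2⌉ (floor and ceiling applied coordinatewise), one has α·H(μ|mₙ) + β·H(ν|mₙ) ≥ γ·H(κ₋|mₙ) + δ·H(κ₊|mₙ). -/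
open scoped BigOperators ENNReal NNReal

/-- A finitely supported probability measure on `A`, viewed as its density. -/
def IsPMF {A : Type*} (μ : A → ℝ) : Prop :=
  (∀ x, 0 ≤ μ x) ∧ (Function.support μ).Finite ∧ ∑ᶠ x, μ x = 1

/-- Relative entropy `H(μ | m)` of a finitely supported probability measure with respect to
the counting measure `m`: `∑ₓ μ(x) log μ(x)` (note `Real.log 0 = 0`, so `0 · log 0 = 0`). -/
noncomputable def relEntropy {A : Type*} (μ : A → ℝ) : ℝ :=
  ∑ᶠ x, μ x * Real.log (μ x)

/-- Push-forward `π ∘ T⁻¹` of a (finitely supported) measure `π` by the map `T`. -/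
noncomputable def pushforward {A B : Type*} (T : A → B) (π : A → ℝ) : B → ℝ :=
  fun z => ∑ᶠ p ∈ {p : A | T p = z}, π p

/-- `π` is a coupling of `μ` and `ν`: a probability measure on the product whose first and
second marginals are `μ` and `ν` respectively. -/
def IsCoupling {A B : Type*} (π : A × B → ℝ) (μ : A → ℝ) (ν : B → ℝ) : Prop :=
  IsPMF π ∧ (∀ x, ∑ᶠ y, π (x, y) = μ x) ∧ (∀ y, ∑ᶠ x, π (x, y) = ν y)

/-!
Write `S` for Shannon entropy, so that `relEntropy = -S`. It suffices to find a coupling `π` with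
`S(μ) + S(ν) ≤ S(κ₋) + S(κ₊)`: entropies of probability measures are nonnegative, so the four
weights may all be replaced by `min γ δ`.

On `ℤ`, build `π` from the top down. Let `x` and `y` be the largest atoms of the two measures and
move the smaller of their masses, say `m = ν(y)`, to the pair `(x, y)`. Every other pair `(a, b)` of
the coupling has `a ≤ x` and `b < y`. Hence one of the two midpoints of `(x, y)`, the floor if
`x + y` is even and the ceiling otherwise, is a new point, so that adding the atom increases the
entropy there by as much as it does for `ν` at `y`. The other midpoint is shared only with pairs
`(x, b)`, whose total mass is at most what is left of `μ(x)`. As `t ↦ -t log t` is concave, the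
increase there is at least that for `μ` at `x`.

The inequality tensorizes: couple the first marginals, then couple the conditional measures over
each pair of first coordinates. Merging fibres can only help because conditional entropy is
superadditive in the measure.
-/

open Finsupp
open Real (negMulLog negMulLog_nonneg negMulLog_mul concaveOn_negMulLog)

section Concave

variable {𝕜 : Type*} [Field 𝕜] [LinearOrder 𝕜] [IsStrictOrderedRing 𝕜] {φ : 𝕜 → 𝕜}

lemma map_add_sub_map_le_of_concaveOn {s : Set 𝕜} (hφ : ConcaveOn 𝕜 s φ) {a c m : 𝕜} (ha : a ∈ s)
    (hcm : c + m ∈ s) (hac : a ≤ c) (hm : 0 ≤ m) : φ (c + m) - φ c ≤ φ (a + m) - φ a := by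
  rcases hm.eq_or_lt with rfl | hm
  · simp
  have hd : 0 < c + m - a := by linarith
  set t := m / (c + m - a)
  have ht0 : 0 ≤ t := div_nonneg hm.le hd.le
  have ht1 : 0 ≤ 1 - t := sub_nonneg.2 ((div_le_one hd).2 (by linarith))
  have htd : t * (c + m - a) = m := div_mul_cancel₀ m hd.ne'
  have hleft := hφ.2 ha hcm ht1 ht0 (by ring)
  have hright := hφ.2 ha hcm ht0 ht1 (by ring)
  simp only [smul_eq_mul] at hleft hright
  rw [show (1 - t) * a + t * (c + m) = a + m by linear_combination htd] at hleft
  rw [show t * a + (1 - t) * (c + m) = c by linear_combination -htd] at hright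
  linarith

lemma perspective_add_le_of_concaveOn (hφ : ConcaveOn 𝕜 (Set.Ici 0) φ) {a b A B : 𝕜} (ha : 0 ≤ a)
    (hb : 0 ≤ b) (haA : a ≤ A) (hbB : b ≤ B) :
    A * φ (a / A) + B * φ (b / B) ≤ (A + B) * φ ((a + b) / (A + B)) := by
  rcases (ha.trans haA).eq_or_lt with rfl | hA
  · simp [le_antisymm haA ha]
  rcases (hb.trans hbB).eq_or_lt with rfl | hB
  · simp [le_antisymm hbB hb]
  have hconc : A / (A + B) * φ (a / A) + B / (A + B) * φ (b / B) ≤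
      φ (A / (A + B) * (a / A) + B / (A + B) * (b / B)) :=
    hφ.2 (div_nonneg ha hA.le) (div_nonneg hb hB.le) (by positivity) (by positivity)
      (by field_simp)
  calc A * φ (a / A) + B * φ (b / B)
      = (A + B) * (A / (A + B) * φ (a / A) + B / (A + B) * φ (b / B)) := by field_simp
    _ ≤ (A + B) * φ (A / (A + B) * (a / A) + B / (A + B) * (b / B)) := by gcongr
    _ = (A + B) * φ ((a + b) / (A + B)) := by congr 2; field_simp

end Concave

section Marginals

variable {A B C M : Type*} [AddCommMonoid M]

lemma mapDomain_apply_eq_sum_filter [DecidableEq B] (u : A → B) (f : A →₀ M) (b : B) :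
    f.mapDomain u b = ∑ a ∈ f.support with u a = b, f a := by
  simp [mapDomain, Finsupp.sum, single_apply, Finset.sum_ite]

lemma mapDomain_apply_le_mapDomain_apply [PartialOrder M] [CanonicallyOrderedAdd M]
    {u : A → B} {v : A → C} {f : A →₀ M} {b : B} {c : C}
    (h : ∀ a, f a ≠ 0 → u a = b → v a = c) : f.mapDomain u b ≤ f.mapDomain v c := by
  classical
  rw [mapDomain_apply_eq_sum_filter, mapDomain_apply_eq_sum_filter]
  refine Finset.sum_le_sum_of_subset fun a ha => ?_
  simp_all

lemma le_mapDomain_apply [PartialOrder M] [CanonicallyOrderedAdd M] (u : A → B) (f : A →₀ M)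
    (a : A) : f a ≤ f.mapDomain u (u a) := by
  simpa using mapDomain_apply_le_mapDomain_apply (f := f) (u := id) (v := u) (b := a)
    fun _ _ h => congrArg u h

lemma mapDomain_mapDomain_comm {D : Type*} {u : A → B} {v : A → C} {u' : B → D} {v' : C → D}
    (h : ∀ a, u' (u a) = v' (v a)) (f : A →₀ M) :
    (f.mapDomain u).mapDomain u' = (f.mapDomain v).mapDomain v' := by
  rw [← mapDomain_comp, ← mapDomain_comp]
  exact congrArg (mapDomain · f) (funext h)

lemma mapDomain_const (f : A →₀ M) (b : B) : f.mapDomain (fun _ => b) = single b f.degree := by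
  rw [degree_apply, single_finsetSum]
  rfl

lemma degree_tsub_single_eq_degree_erase [PartialOrder M] [CanonicallyOrderedAdd M] [Sub M]
    [OrderedSub M] [IsCancelAdd M] {f : A →₀ M} {g : B →₀ M} (hfg : f.degree = g.degree) {x : A}
    {y : B} (hle : g y ≤ f x) :
    (f - single x (g y)).degree = (g.erase y).degree := by
  have hf : f - single x (g y) + single x (g y) = f := tsub_add_cancel_of_le (by simpa using hle)
  rw [← hf, ← erase_add_single y g, map_add, map_add] at hfg
  simpa using hfg

lemma degree_smul_eq_mul {R : Type*} [Semiring R] (c : R) (f : A →₀ R) :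
    (c • f).degree = c * f.degree :=
  (sum_smul_index (h := fun _ r => r) fun _ => rfl).trans (Finset.mul_sum ..).symm

lemma curry_zero : (0 : A × B →₀ M).curry = 0 :=
  map_zero curryAddEquiv

lemma curry_add (f g : A × B →₀ M) : (f + g).curry = f.curry + g.curry :=
  map_add curryAddEquiv f g

lemma mapDomain_fst_eq_mapRange_curry (f : A × B →₀ M) :
    f.mapDomain Prod.fst = f.curry.mapRange degree (map_zero _) := by
  induction f using Finsupp.induction_linear with
  | zero => rw [mapDomain_zero, curry_zero, mapRange_zero]
  | add f g hf hg =>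
    rw [mapDomain_add, hf, hg, curry_add, mapRange_add (map_add degree)]
  | single a m => simp

lemma sum_curry_mapDomain_mk (f : A × B →₀ M) :
    (f.curry.sum fun a r => r.mapDomain (Prod.mk a)) = f :=
  (sum_curry_index f fun a b m => single (a, b) m).trans f.sum_single

lemma curry_mapDomain_mk (a : A) (r : B →₀ M) : (r.mapDomain (Prod.mk a)).curry = single a r := by
  ext a' b
  rcases eq_or_ne a a' with rfl | h
  · simp [mapDomain_apply (Prod.mk_right_injective a)]
  · rw [single_eq_of_ne' h, curry_apply, mapDomain_of_notMem_range _ _ (by simp [h])]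
    rfl

lemma mapDomain_prodMap_sum_mapDomain_mk {A' B' C' : Type*} (s : Finset (A × B))
    (r : A × B → A' × B' →₀ M) (c : A × B → C) (d : A' × B' → C') :
    ((∑ p ∈ s, (r p).mapDomain (Prod.mk p)).mapDomain
      (Equiv.prodProdProdComm A A' B B').symm).mapDomain
        (Prod.map c d ∘ Equiv.prodProdProdComm A A' B B') =
      ∑ p ∈ s, ((r p).mapDomain d).mapDomain (Prod.mk (c p)) := by
  rw [← mapDomain_comp, Function.comp_assoc, Equiv.self_comp_symm, Function.comp_id]
  simp only [mapDomain_finsetSum, ← mapDomain_comp]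
  rfl

end Marginals

section Entropy

variable {A B : Type*}

/-- The Shannon entropy of a finitely supported measure, of any total mass. -/
noncomputable def shannonEntropy (f : A →₀ ℝ≥0) : ℝ :=
  f.sum fun _ t => negMulLog t

/-- The total mass of a finitely supported measure times the Shannon entropy of its normalisation.
Unlike `shannonEntropy` it is homogeneous, which makes it superadditive. -/
noncomputable def homogeneousEntropy (f : A →₀ ℝ≥0) : ℝ :=
  f.sum fun _ t => f.degree * negMulLog (t / f.degree)

/-- The entropy of the second coordinate conditionally on the first, for a finitely supported
measure on a product: the fibres `f.curry a` are left unnormalised, so each of them contributes its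
conditional entropy weighted by its mass. -/
noncomputable def condEntropy (f : A × B →₀ ℝ≥0) : ℝ :=
  f.curry.sum fun _ r => homogeneousEntropy r

lemma shannonEntropy_single (a : A) (m : ℝ≥0) : shannonEntropy (single a m) = negMulLog m := by
  simp [shannonEntropy]

lemma shannonEntropy_add_single (f : A →₀ ℝ≥0) (a : A) (m : ℝ≥0) :
    shannonEntropy (f + single a m) =
      shannonEntropy f + (negMulLog (f a + m) - negMulLog (f a)) := by
  classical
  unfold shannonEntropy
  rw [← add_sum_erase' (f + single a m) a _ (by simp), ← add_sum_erase' f a _ (by simp)]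
  simp only [coe_add, Pi.add_apply, single_eq_same, erase_add, erase_single, add_zero,
    NNReal.coe_add]
  ring

lemma shannonEntropy_mapDomain {e : A → B} (he : Function.Injective e) (f : A →₀ ℝ≥0) :
    shannonEntropy (f.mapDomain e) = shannonEntropy f :=
  sum_mapDomain_index_inj he

lemma shannonEntropy_nonneg {f : A →₀ ℝ≥0} (hf : f.degree = 1) : 0 ≤ shannonEntropy f :=
  Finset.sum_nonneg fun a _ =>
    negMulLog_nonneg (f a).2 (NNReal.coe_le_one.2 (hf ▸ le_degree a f))

lemma homogeneousEntropy_zero : homogeneousEntropy (0 : A →₀ ℝ≥0) = 0 :=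
  sum_zero_index

lemma shannonEntropy_eq_negMulLog_degree_add (f : A →₀ ℝ≥0) :
    shannonEntropy f = negMulLog f.degree + homogeneousEntropy f := by
  rcases eq_or_ne f 0 with rfl | hf
  · simp [shannonEntropy, homogeneousEntropy]
  have hd : (f.degree : ℝ) ≠ 0 := NNReal.coe_ne_zero.2 (degree_eq_zero_iff f |>.not.2 hf)
  have hsplit (t : ℝ≥0) : negMulLog t =
      t * (negMulLog f.degree / f.degree) + f.degree * negMulLog (t / f.degree) := by
    nth_rw 1 [← mul_div_cancel₀ (t : ℝ) hd]
    rw [negMulLog_mul]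
    ring
  calc shannonEntropy f
      = ∑ a ∈ f.support, (f a * (negMulLog f.degree / f.degree) +
          f.degree * negMulLog (f a / f.degree)) := Finset.sum_congr rfl fun a _ => hsplit (f a)
    _ = f.degree * (negMulLog f.degree / f.degree) + homogeneousEntropy f := by
      rw [Finset.sum_add_distrib, ← Finset.sum_mul, ← NNReal.coe_sum, ← degree_apply]
      rfl
    _ = negMulLog f.degree + homogeneousEntropy f := by rw [mul_div_cancel₀ _ hd]

lemma homogeneousEntropy_add_le_of_shannonEntropy_add_le {C D : Type*} {f : A →₀ ℝ≥0}
    {g : B →₀ ℝ≥0} {k : C →₀ ℝ≥0} {l : D →₀ ℝ≥0} {m : ℝ≥0} (hf : f.degree = m)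
    (hg : g.degree = m) (hk : k.degree = m) (hl : l.degree = m)
    (h : shannonEntropy f + shannonEntropy g ≤ shannonEntropy k + shannonEntropy l) :
    homogeneousEntropy f + homogeneousEntropy g ≤ homogeneousEntropy k + homogeneousEntropy l := by
  simp only [shannonEntropy_eq_negMulLog_degree_add, hf, hg, hk, hl] at h
  linarith

lemma homogeneousEntropy_smul (c : ℝ≥0) (f : A →₀ ℝ≥0) :
    homogeneousEntropy (c • f) = c * homogeneousEntropy f := by
  rcases eq_or_ne c 0 with rfl | hc
  · simp [homogeneousEntropy]
  · have hc' : (c : ℝ) ≠ 0 := NNReal.coe_ne_zero.2 hc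
    simp [homogeneousEntropy, Finsupp.sum, support_smul_eq hc, degree_smul_eq_mul, Finset.mul_sum,
      mul_div_mul_left _ _ hc', mul_assoc]

lemma homogeneousEntropy_add_le (f g : A →₀ ℝ≥0) :
    homogeneousEntropy f + homogeneousEntropy g ≤ homogeneousEntropy (f + g) := by
  classical
  have hsum {h : A →₀ ℝ≥0} (hh : h.support ⊆ f.support ∪ g.support) : homogeneousEntropy h =
      ∑ a ∈ f.support ∪ g.support, (h.degree : ℝ) * negMulLog (h a / h.degree) :=
    sum_of_support_subset h hh _ (by simp)
  rw [hsum Finset.subset_union_left, hsum Finset.subset_union_right, hsum support_add,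
    ← Finset.sum_add_distrib]
  refine Finset.sum_le_sum fun a _ => ?_
  simp only [map_add, coe_add, Pi.add_apply, NNReal.coe_add]
  exact perspective_add_le_of_concaveOn concaveOn_negMulLog (f a).2 (g a).2
    (NNReal.coe_le_coe.2 (le_degree a f)) (NNReal.coe_le_coe.2 (le_degree a g))

lemma condEntropy_add_le (f g : A × B →₀ ℝ≥0) :
    condEntropy f + condEntropy g ≤ condEntropy (f + g) := by
  classical
  have hsum {h : A →₀ B →₀ ℝ≥0} (hh : h.support ⊆ f.curry.support ∪ g.curry.support) :
      (h.sum fun _ r => homogeneousEntropy r) =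
        ∑ a ∈ f.curry.support ∪ g.curry.support, homogeneousEntropy (h a) :=
    sum_of_support_subset h hh _ (by simp [homogeneousEntropy_zero])
  unfold condEntropy
  rw [curry_add, hsum Finset.subset_union_left, hsum Finset.subset_union_right, hsum support_add,
    ← Finset.sum_add_distrib]
  exact Finset.sum_le_sum fun a _ => homogeneousEntropy_add_le _ _

lemma sum_condEntropy_le {ι : Type*} (s : Finset ι) (f : ι → A × B →₀ ℝ≥0) :
    ∑ i ∈ s, condEntropy (f i) ≤ condEntropy (∑ i ∈ s, f i) :=
  Finset.le_sum_of_subadditive (N := ℝᵒᵈ) condEntropy (by simp [condEntropy, curry_zero]; rfl)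
    condEntropy_add_le s f

lemma condEntropy_mapDomain_mk (a : A) (r : B →₀ ℝ≥0) :
    condEntropy (r.mapDomain (Prod.mk a)) = homogeneousEntropy r := by
  rw [condEntropy, curry_mapDomain_mk, sum_single_index homogeneousEntropy_zero]

lemma shannonEntropy_eq_add_condEntropy (f : A × B →₀ ℝ≥0) :
    shannonEntropy f = shannonEntropy (f.mapDomain Prod.fst) + condEntropy f := by
  rw [mapDomain_fst_eq_mapRange_curry, shannonEntropy, shannonEntropy,
    sum_mapRange_index (by simp), ← sum_curry_index f fun _ _ t => negMulLog t, condEntropy,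
    ← sum_add]
  exact sum_congr fun a _ => shannonEntropy_eq_negMulLog_degree_add _

lemma shannonEntropy_mapDomain_add_sum_le {P : Type*} (σ : P →₀ ℝ≥0) (c : P → A)
    {r : P → B →₀ ℝ≥0} (hr : ∀ p, (r p).degree = σ p) :
    shannonEntropy (σ.mapDomain c) + ∑ p ∈ σ.support, homogeneousEntropy (r p) ≤
      shannonEntropy (∑ p ∈ σ.support, (r p).mapDomain (Prod.mk (c p))) := by
  have hfst : (∑ p ∈ σ.support, (r p).mapDomain (Prod.mk (c p))).mapDomain Prod.fst =
      σ.mapDomain c := by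
    simp only [mapDomain_finsetSum, ← mapDomain_comp, Function.comp_def, mapDomain_const, hr]
    rfl
  rw [shannonEntropy_eq_add_condEntropy (∑ p ∈ σ.support, _), hfst]
  gcongr
  simpa only [condEntropy_mapDomain_mk] using
    sum_condEntropy_le σ.support fun p => (r p).mapDomain (Prod.mk (c p))

end Entropy

section Tensorization

variable {A A' B B' C C' D D' P : Type*}

lemma support_mapDomain_fst {M : Type*} [AddCommMonoid M] [Subsingleton (AddUnits M)]
    (f : A × B →₀ M) : (f.mapDomain Prod.fst).support = f.curry.support := by
  classical
  rw [mapDomain_support_of_subsingletonAddUnits, support_curry]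

lemma sum_div_mapDomain_smul {R M : Type*} [DivisionSemiring R] [AddCommMonoid M] [Module R M]
    (u : P → A) (σ : P →₀ R) (Φ : A → M) :
    ∑ p ∈ σ.support, (σ p / σ.mapDomain u (u p)) • Φ (u p) =
      ∑ a ∈ (σ.mapDomain u).support, Φ a := by
  calc ∑ p ∈ σ.support, (σ p / σ.mapDomain u (u p)) • Φ (u p)
      = (σ.mapDomain u).sum fun a w => (w / σ.mapDomain u a) • Φ a :=
        (sum_mapDomain_index (h := fun a w => (w / σ.mapDomain u a) • Φ a) (by simp)
          fun a w w' => by rw [add_div, add_smul]).symm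
    _ = ∑ a ∈ (σ.mapDomain u).support, Φ a :=
        Finset.sum_congr rfl fun a ha => by
          beta_reduce
          rw [div_self (mem_support_iff.1 ha), one_smul]

/-- Given measures `σ` on `P` and `f` on `A × A'` such that the image of `σ` under `u : P → A` is
the first marginal of `f`, the measure of mass `σ p` proportional to the fibre of `f` over `u p`.
Where `σ.mapDomain u` vanishes, so does the fibre, and the division by zero is harmless. -/
noncomputable def pullbackFiber (u : P → A) (σ : P →₀ ℝ≥0) (f : A × A' →₀ ℝ≥0) (p : P) :
    A' →₀ ℝ≥0 :=
  (σ p / σ.mapDomain u (u p)) • f.curry (u p)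

section

variable {u : P → A} {σ : P →₀ ℝ≥0} {f : A × A' →₀ ℝ≥0}

lemma degree_pullbackFiber (h : σ.mapDomain u = f.mapDomain Prod.fst) (p : P) :
    (pullbackFiber u σ f p).degree = σ p := by
  have hmass : (f.curry (u p)).degree = σ.mapDomain u (u p) := by
    rw [h, mapDomain_fst_eq_mapRange_curry, mapRange_apply]
  rw [pullbackFiber, degree_smul_eq_mul, hmass]
  exact div_mul_cancel_of_imp fun h0 => le_zero_iff.1 (h0 ▸ le_mapDomain_apply u σ p)

lemma sum_mapDomain_mk_pullbackFiber (h : σ.mapDomain u = f.mapDomain Prod.fst) :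
    ∑ p ∈ σ.support, (pullbackFiber u σ f p).mapDomain (Prod.mk (u p)) = f := by
  simp only [pullbackFiber, mapDomain_smul]
  rw [sum_div_mapDomain_smul u σ fun a => (f.curry a).mapDomain (Prod.mk a), h,
    support_mapDomain_fst]
  exact sum_curry_mapDomain_mk f

lemma sum_homogeneousEntropy_pullbackFiber (h : σ.mapDomain u = f.mapDomain Prod.fst) :
    ∑ p ∈ σ.support, homogeneousEntropy (pullbackFiber u σ f p) = condEntropy f := by
  simp only [pullbackFiber, homogeneousEntropy_smul]
  have hsum := sum_div_mapDomain_smul u σ fun a => homogeneousEntropy (f.curry a)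
  rwa [h, support_mapDomain_fst, ← h] at hsum

end

/-- The measures `f` and `g` have a coupling such that the entropies of its images under `s` and `t`
add up to at least those of `f` and `g`. -/
def HasEntropyIncreasingCoupling (s : A × B → C) (t : A × B → D) (f : A →₀ ℝ≥0) (g : B →₀ ℝ≥0) :
    Prop :=
  ∃ π : A × B →₀ ℝ≥0, π.mapDomain Prod.fst = f ∧ π.mapDomain Prod.snd = g ∧
    shannonEntropy f + shannonEntropy g ≤
      shannonEntropy (π.mapDomain s) + shannonEntropy (π.mapDomain t)

/-- Any two finitely supported measures of equal mass have a coupling whose images under `s` and `t`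
increase the total entropy. Measures of arbitrary mass are allowed because the fibres of a measure
on a product are not normalised. -/
def EntropyIncreasing (s : A × B → C) (t : A × B → D) : Prop :=
  ∀ (f : A →₀ ℝ≥0) (g : B →₀ ℝ≥0), f.degree = g.degree → HasEntropyIncreasingCoupling s t f g

lemma EntropyIncreasing.of_unique [Unique A] [Unique B] (s : A × B → C) (t : A × B → D) :
    EntropyIncreasing s t := by
  intro f g hfg
  have hf := unique_single f
  have hg := unique_single g
  have hmass : f default = g default := by rw [hf, hg] at hfg; simpa using hfg
  refine ⟨single (default, default) (f default), ?_, ?_, ?_⟩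
  · rw [mapDomain_single, ← hf]
  · rw [mapDomain_single, hmass, ← hg]
  · rw [hf, hg]
    simp [shannonEntropy_single, hmass]

lemma EntropyIncreasing.congr {s : A × B → C} {t : A × B → D} (h : EntropyIncreasing s t)
    (eA : A ≃ A') (eB : B ≃ B') (eC : C ≃ C') (eD : D ≃ D') {s' : A' × B' → C'}
    {t' : A' × B' → D'} (hs : ∀ p, s' (Prod.map eA eB p) = eC (s p))
    (ht : ∀ p, t' (Prod.map eA eB p) = eD (t p)) : EntropyIncreasing s' t' := by
  intro f g hfg
  obtain ⟨π, hπf, hπg, hπ⟩ := h (f.mapDomain eA.symm) (g.mapDomain eB.symm)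
    (by simpa only [degree_mapDomain] using hfg)
  refine ⟨π.mapDomain (Prod.map eA eB), ?_, ?_, ?_⟩
  · rw [mapDomain_mapDomain_comm (u' := Prod.fst) (v := Prod.fst) (v' := eA) fun _ => rfl, hπf,
      ← mapDomain_comp, eA.self_comp_symm, mapDomain_id]
  · rw [mapDomain_mapDomain_comm (u' := Prod.snd) (v := Prod.snd) (v' := eB) fun _ => rfl, hπg,
      ← mapDomain_comp, eB.self_comp_symm, mapDomain_id]
  · rw [mapDomain_mapDomain_comm hs, mapDomain_mapDomain_comm ht,
      shannonEntropy_mapDomain eC.injective, shannonEntropy_mapDomain eD.injective]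
    rwa [shannonEntropy_mapDomain eA.symm.injective,
      shannonEntropy_mapDomain eB.symm.injective] at hπ

theorem EntropyIncreasing.prod {s : A × B → C} {t : A × B → D} {s' : A' × B' → C'}
    {t' : A' × B' → D'} (h : EntropyIncreasing s t) (h' : EntropyIncreasing s' t') :
    EntropyIncreasing (Prod.map s s' ∘ Equiv.prodProdProdComm A A' B B')
      (Prod.map t t' ∘ Equiv.prodProdProdComm A A' B B') := by
  intro f g hfg
  obtain ⟨σ, hσf, hσg, hσ⟩ := h (f.mapDomain Prod.fst) (g.mapDomain Prod.fst)
    (by simpa only [degree_mapDomain] using hfg)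
  have hf := degree_pullbackFiber hσf
  have hg := degree_pullbackFiber hσg
  choose ρ hρf hρg hρ using fun p => h' (pullbackFiber Prod.fst σ f p)
    (pullbackFiber Prod.snd σ g p) ((hf p).trans (hg p).symm)
  have hmass (p : A × B) : (ρ p).degree = σ p := by
    rw [← degree_mapDomain Prod.fst, hρf, hf]
  have hs' (p : A × B) := (degree_mapDomain s' (ρ p)).trans (hmass p)
  have ht' (p : A × B) := (degree_mapDomain t' (ρ p)).trans (hmass p)
  have hcond : condEntropy f + condEntropy g ≤
      ∑ p ∈ σ.support, homogeneousEntropy ((ρ p).mapDomain s') +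
        ∑ p ∈ σ.support, homogeneousEntropy ((ρ p).mapDomain t') := by
    rw [← sum_homogeneousEntropy_pullbackFiber hσf, ← sum_homogeneousEntropy_pullbackFiber hσg,
      ← Finset.sum_add_distrib, ← Finset.sum_add_distrib]
    exact Finset.sum_le_sum fun p _ =>
      homogeneousEntropy_add_le_of_shannonEntropy_add_le (hf p) (hg p) (hs' p) (ht' p) (hρ p)
  refine ⟨(∑ p ∈ σ.support, (ρ p).mapDomain (Prod.mk p)).mapDomain
    (Equiv.prodProdProdComm A A' B B').symm, ?_, ?_, ?_⟩
  · refine (mapDomain_prodMap_sum_mapDomain_mk σ.support ρ Prod.fst Prod.fst).trans ?_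
    simpa only [hρf] using sum_mapDomain_mk_pullbackFiber hσf
  · refine (mapDomain_prodMap_sum_mapDomain_mk σ.support ρ Prod.snd Prod.snd).trans ?_
    simpa only [hρg] using sum_mapDomain_mk_pullbackFiber hσg
  · rw [mapDomain_prodMap_sum_mapDomain_mk, mapDomain_prodMap_sum_mapDomain_mk,
      shannonEntropy_eq_add_condEntropy f, shannonEntropy_eq_add_condEntropy g]
    have hs := shannonEntropy_mapDomain_add_sum_le σ s hs'
    have ht := shannonEntropy_mapDomain_add_sum_le σ t ht'
    linarith

theorem EntropyIncreasing.pi {s : A × B → C} {t : A × B → D} (h : EntropyIncreasing s t)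
    (ι : Type*) [Finite ι] :
    EntropyIncreasing (fun (p : (ι → A) × (ι → B)) i => s (p.1 i, p.2 i))
      (fun p i => t (p.1 i, p.2 i)) := by
  induction ι using Finite.induction_empty_option with
  | of_equiv e ih =>
    exact ih.congr (e.arrowCongr (.refl A)) (e.arrowCongr (.refl B)) (e.arrowCongr (.refl C))
      (e.arrowCongr (.refl D)) (fun _ => rfl) fun _ => rfl
  | h_empty => exact .of_unique _ _
  | h_option ih =>
    refine (h.prod ih).congr (Equiv.piOptionEquivProd (β := fun _ => A)).symm
      (Equiv.piOptionEquivProd (β := fun _ => B)).symm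
      (Equiv.piOptionEquivProd (β := fun _ => C)).symm
      (Equiv.piOptionEquivProd (β := fun _ => D)).symm ?_ ?_ <;>
    · intro p
      ext (_ | i) <;> rfl

end Tensorization

section Coupling

variable {A B C D : Type*} {s : A × B → C} {t : A × B → D} {f : A →₀ ℝ≥0} {g : B →₀ ℝ≥0}

lemma HasEntropyIncreasingCoupling.symm (h : HasEntropyIncreasingCoupling s t f g) :
    HasEntropyIncreasingCoupling t s f g := by
  simpa only [HasEntropyIncreasingCoupling, add_comm (shannonEntropy (mapDomain s _))] using h

lemma HasEntropyIncreasingCoupling.swap (h : HasEntropyIncreasingCoupling s t f g) :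
    HasEntropyIncreasingCoupling (s ∘ Prod.swap) (t ∘ Prod.swap) g f := by
  obtain ⟨π, hπf, hπg, hπ⟩ := h
  refine ⟨π.mapDomain Prod.swap, ?_, ?_, ?_⟩
  · rwa [← mapDomain_comp]
  · rwa [← mapDomain_comp]
  · rw [← mapDomain_comp, ← mapDomain_comp, add_comm]
    simpa only [Function.comp_assoc, Prod.swap_swap_eq, Function.comp_id] using hπ

lemma HasEntropyIncreasingCoupling.add_single (h : HasEntropyIncreasingCoupling s t f g) {x : A}
    {y : B} (m : ℝ≥0) (hy : g y = 0) (hs : ∀ a b, f a ≠ 0 → g b ≠ 0 → s (a, b) ≠ s (x, y))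
    (ht : ∀ a b, f a ≠ 0 → g b ≠ 0 → t (a, b) = t (x, y) → a = x) :
    HasEntropyIncreasingCoupling s t (f + single x m) (g + single y m) := by
  obtain ⟨π, rfl, rfl, hπ⟩ := h
  have hfst (p : A × B) (hp : π p ≠ 0) : π.mapDomain Prod.fst p.1 ≠ 0 :=
    fun h0 => hp (le_zero_iff.1 (h0 ▸ le_mapDomain_apply Prod.fst π p))
  have hsnd (p : A × B) (hp : π p ≠ 0) : π.mapDomain Prod.snd p.2 ≠ 0 :=
    fun h0 => hp (le_zero_iff.1 (h0 ▸ le_mapDomain_apply Prod.snd π p))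
  have hfresh : π.mapDomain s (s (x, y)) = 0 := by
    classical
    rw [mapDomain_apply_eq_sum_filter, Finset.filter_false_of_mem, Finset.sum_empty]
    intro p hp
    exact hs _ _ (hfst p (mem_support_iff.1 hp)) (hsnd p (mem_support_iff.1 hp))
  have hshared : π.mapDomain t (t (x, y)) ≤ π.mapDomain Prod.fst x :=
    mapDomain_apply_le_mapDomain_apply fun p hp => ht _ _ (hfst p hp) (hsnd p hp)
  have hincr := map_add_sub_map_le_of_concaveOn concaveOn_negMulLog
    (NNReal.coe_nonneg (π.mapDomain t (t (x, y))))
    (add_nonneg (NNReal.coe_nonneg (π.mapDomain Prod.fst x)) (NNReal.coe_nonneg m))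
    (NNReal.coe_le_coe.2 hshared) (NNReal.coe_nonneg m)
  refine ⟨π + single (x, y) m, ?_, ?_, ?_⟩
  · rw [mapDomain_add, mapDomain_single]
  · rw [mapDomain_add, mapDomain_single]
  · simp only [mapDomain_add, mapDomain_single, shannonEntropy_add_single, hy, hfresh]
    linarith

end Coupling

section Midpoint

/-- The map `(x, y) ↦ ⌊(x + y) / 2⌋` on `ℤ`, written `T₋` in the paper. -/
def floorMidpoint (p : ℤ × ℤ) : ℤ :=
  ⌊((p.1 + p.2 : ℤ) : ℚ) / 2⌋

/-- The map `(x, y) ↦ ⌈(x + y) / 2⌉` on `ℤ`, written `T₊` in the paper. -/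
def ceilMidpoint (p : ℤ × ℤ) : ℤ :=
  ⌈((p.1 + p.2 : ℤ) : ℚ) / 2⌉

lemma floorMidpoint_eq_ediv (p : ℤ × ℤ) : floorMidpoint p = (p.1 + p.2) / 2 :=
  Rat.floor_intCast_div_natCast (p.1 + p.2) 2

lemma ceilMidpoint_eq_ediv (p : ℤ × ℤ) : ceilMidpoint p = (p.1 + p.2 + 1) / 2 := by
  have hfloor : ⌊-(((p.1 + p.2 : ℤ) : ℚ) / 2)⌋ = -(p.1 + p.2) / 2 := by
    rw [← neg_div, ← Int.cast_neg]
    exact Rat.floor_intCast_div_natCast (-(p.1 + p.2)) 2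
  rw [Int.floor_neg] at hfloor
  unfold ceilMidpoint
  lia

lemma floorMidpoint_comp_swap : floorMidpoint ∘ Prod.swap = floorMidpoint := by
  ext p
  simp [floorMidpoint, add_comm]

lemma ceilMidpoint_comp_swap : ceilMidpoint ∘ Prod.swap = ceilMidpoint := by
  ext p
  simp [ceilMidpoint, add_comm]

variable {f g : ℤ →₀ ℝ≥0} {x y : ℤ}

lemma hasEntropyIncreasingCoupling_midpoint_add_single
    (h : HasEntropyIncreasingCoupling floorMidpoint ceilMidpoint f g) (m : ℝ≥0)
    (hx : ∀ a, f a ≠ 0 → a ≤ x) (hy : ∀ b, g b ≠ 0 → b < y) :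
    HasEntropyIncreasingCoupling floorMidpoint ceilMidpoint (f + single x m) (g + single y m) := by
  have hgy : g y = 0 := not_ne_iff.1 fun h0 => (hy y h0).false
  rcases Int.even_or_odd' (x + y) with ⟨k, hk | hk⟩
  · refine h.add_single m hgy ?_ ?_ <;>
    · intro a b ha hb
      simp only [floorMidpoint_eq_ediv, ceilMidpoint_eq_ediv]
      have := hx a ha
      have := hy b hb
      lia
  · refine (h.symm.add_single m hgy ?_ ?_).symm <;>
    · intro a b ha hb
      simp only [floorMidpoint_eq_ediv, ceilMidpoint_eq_ediv]
      have := hx a ha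
      have := hy b hb
      lia

lemma hasEntropyIncreasingCoupling_midpoint_of_tsub_single (hx : ∀ a, f a ≠ 0 → a ≤ x)
    (hy : ∀ b, g b ≠ 0 → b ≤ y) (hle : g y ≤ f x)
    (h : HasEntropyIncreasingCoupling floorMidpoint ceilMidpoint (f - single x (g y))
      (g.erase y)) :
    HasEntropyIncreasingCoupling floorMidpoint ceilMidpoint f g := by
  have hf : f - single x (g y) + single x (g y) = f := tsub_add_cancel_of_le (by simpa using hle)
  have hx' (a : ℤ) (ha : (f - single x (g y)) a ≠ 0) : a ≤ x :=
    hx a (mem_support_iff.1 (support_tsub (mem_support_iff.2 ha)))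
  have hy' (b : ℤ) (hb : g.erase y b ≠ 0) : b < y := by
    have hby : b ≠ y := by rintro rfl; exact hb erase_same
    exact (hy b (by rwa [erase_ne hby] at hb)).lt_of_ne hby
  have hadd := hasEntropyIncreasingCoupling_midpoint_add_single h (g y) hx' hy'
  rwa [hf, erase_add_single] at hadd

theorem entropyIncreasing_midpoint : EntropyIncreasing floorMidpoint ceilMidpoint := by
  intro f g hfg
  induction hN : f.support.card + g.support.card using Nat.strong_induction_on
    generalizing f g with
  | _ N ih =>
  rcases eq_or_ne f 0 with rfl | hf
  · obtain rfl : g = 0 := by rwa [map_zero, eq_comm, degree_eq_zero_iff] at hfg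
    exact ⟨0, by simp⟩
  have hg : g ≠ 0 := by
    rintro rfl
    exact hf (by rwa [map_zero, degree_eq_zero_iff] at hfg)
  obtain ⟨x, hxf, hx⟩ := f.support.exists_max_image id (support_nonempty_iff.2 hf)
  obtain ⟨y, hyg, hy⟩ := g.support.exists_max_image id (support_nonempty_iff.2 hg)
  wlog hle : g y ≤ f x generalizing f g x y
  · have hswap := (this g f hfg.symm (by rwa [add_comm]) hg hf y hyg hy x hxf hx
      (le_of_not_ge hle)).swap
    rwa [floorMidpoint_comp_swap, ceilMidpoint_comp_swap] at hswap
  have hcard : (f - single x (g y)).support.card + (g.erase y).support.card < N := by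
    rw [← hN, support_erase]
    exact add_lt_add_of_le_of_lt (Finset.card_le_card support_tsub)
      (Finset.card_erase_lt_of_mem hyg)
  exact hasEntropyIncreasingCoupling_midpoint_of_tsub_single
    (fun a ha => hx a (mem_support_iff.2 ha)) (fun b hb => hy b (mem_support_iff.2 hb)) hle
    (ih _ hcard _ _ (degree_tsub_single_eq_degree_erase hfg hle) rfl)

end Midpoint

section Densities

variable {A B : Type*}

lemma pushforward_coe (T : A → B) (π : A →₀ ℝ≥0) :
    pushforward T (fun a => (π a : ℝ)) = fun b => (π.mapDomain T b : ℝ) := by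
  classical
  ext b
  rw [mapDomain_apply_eq_sum_filter, NNReal.coe_sum, pushforward]
  exact finsum_mem_eq_sum_of_inter_support_eq _ (by ext; simp [and_comm])

lemma relEntropy_coe (f : A →₀ ℝ≥0) : relEntropy (fun a => (f a : ℝ)) = -shannonEntropy f := by
  rw [relEntropy, finsum_eq_sum_of_support_subset (s := f.support) _ (by intro a; simp; tauto),
    shannonEntropy, Finsupp.sum, ← Finset.sum_neg_distrib]
  simp [Real.negMulLog]

lemma finsum_coe_eq_degree (f : A →₀ ℝ≥0) : ∑ᶠ a, (f a : ℝ) = f.degree := by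
  rw [degree_apply, NNReal.coe_sum]
  exact finsum_eq_sum_of_support_subset _ (by intro a; simp)

lemma isPMF_coe {f : A →₀ ℝ≥0} : IsPMF (fun a => (f a : ℝ)) ↔ f.degree = 1 := by
  rw [IsPMF, finsum_coe_eq_degree, NNReal.coe_eq_one]
  exact ⟨fun h => h.2.2, fun h =>
    ⟨fun a => (f a).2, f.support.finite_toSet.subset (by intro a; simp), h⟩⟩

lemma IsPMF.exists_finsupp {μ : A → ℝ} (h : IsPMF μ) :
    ∃ f : A →₀ ℝ≥0, μ = fun a => (f a : ℝ) :=
  ⟨ofSupportFinite (fun a => (μ a).toNNReal)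
      (h.2.1.subset (Function.support_comp_subset Real.toNNReal_zero μ)),
    funext fun a => (Real.coe_toNNReal _ (h.1 a)).symm⟩

lemma pushforward_fst (π : A × B → ℝ) (a : A) : pushforward Prod.fst π a = ∑ᶠ b, π (a, b) := by
  have hfiber : {p : A × B | p.1 = a} = Set.range (Prod.mk a) := by ext ⟨_, _⟩; simp [eq_comm]
  rw [pushforward, hfiber, finsum_mem_range (Prod.mk_right_injective a)]

lemma pushforward_snd (π : A × B → ℝ) (b : B) : pushforward Prod.snd π b = ∑ᶠ a, π (a, b) := by
  have hfiber : {p : A × B | p.2 = b} = Set.range (·, b) := by ext ⟨_, _⟩; simp [eq_comm]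
  rw [pushforward, hfiber, finsum_mem_range (Prod.mk_left_injective b)]

lemma isCoupling_coe {π : A × B →₀ ℝ≥0} (h : π.degree = 1) :
    IsCoupling (fun p => (π p : ℝ)) (fun a => (π.mapDomain Prod.fst a : ℝ))
      (fun b => (π.mapDomain Prod.snd b : ℝ)) := by
  rw [← pushforward_coe, ← pushforward_coe]
  exact ⟨isPMF_coe.2 h, fun a => (pushforward_fst (fun p => (π p : ℝ)) a).symm,
    fun b => (pushforward_snd (fun p => (π p : ℝ)) b).symm⟩

end Densities

lemma mul_add_mul_le_mul_add_mul_of_max_le_min {R : Type*} [CommRing R] [LinearOrder R]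
    [IsStrictOrderedRing R] {α β γ δ a b c d : R} (hγ : 0 ≤ γ) (hδ : 0 ≤ δ)
    (hmix : max α β ≤ min γ δ) (ha : 0 ≤ a) (hb : 0 ≤ b) (hc : 0 ≤ c) (hd : 0 ≤ d)
    (h : a + b ≤ c + d) : α * a + β * b ≤ γ * c + δ * d := by
  obtain ⟨hα, hβ⟩ := max_le_iff.1 hmix
  calc α * a + β * b ≤ min γ δ * a + min γ δ * b := by gcongr
    _ = min γ δ * (a + b) := (mul_add ..).symm
    _ ≤ min γ δ * (c + d) := mul_le_mul_of_nonneg_left h (le_min hγ hδ)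
    _ = min γ δ * c + min γ δ * d := mul_add ..
    _ ≤ γ * c + δ * d := by gcongr <;> simp

theorem entropy_midpoint_zn_general {ι : Type*} [Finite ι] {μ ν : (ι → ℤ) → ℝ} (hμ : IsPMF μ)
    (hν : IsPMF ν) :
    ∃ π : (ι → ℤ) × (ι → ℤ) → ℝ, IsCoupling π μ ν ∧
      ∀ α β γ δ : ℝ, 0 ≤ γ → 0 ≤ δ → max α β ≤ min γ δ →
        α * relEntropy μ + β * relEntropy ν ≥
          γ * relEntropy
            (pushforward (fun p => fun i => ⌊((p.1 i + p.2 i : ℤ) : ℚ) / 2⌋) π) +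
          δ * relEntropy
            (pushforward (fun p => fun i => ⌈((p.1 i + p.2 i : ℤ) : ℚ) / 2⌉) π) := by
  obtain ⟨f, rfl⟩ := hμ.exists_finsupp
  obtain ⟨g, rfl⟩ := hν.exists_finsupp
  rw [isPMF_coe] at hμ hν
  obtain ⟨π, rfl, rfl, hπ⟩ := entropyIncreasing_midpoint.pi ι f g (hμ.trans hν.symm)
  rw [degree_mapDomain] at hμ
  refine ⟨fun p => (π p : ℝ), isCoupling_coe hμ, fun α β γ δ hγ hδ hmix => ?_⟩
  have hnonneg {C : Type _} (u : (ι → ℤ) × (ι → ℤ) → C) : 0 ≤ shannonEntropy (π.mapDomain u) :=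
    shannonEntropy_nonneg ((degree_mapDomain u π).trans hμ)
  have hle := mul_add_mul_le_mul_add_mul_of_max_le_min hγ hδ hmix (hnonneg _) (hnonneg _)
    (hnonneg _) (hnonneg _) hπ
  simp only [pushforward_coe, relEntropy_coe, mul_neg, ← neg_add, ge_iff_le, neg_le_neg_iff]
  exact hle

/-- **Displacement convexity of entropy for the midpoint maps on `ℤⁿ`**: there is a
coupling `π` of `μ` and `ν` with
`α H(μ|m) + β H(ν|m) ≥ γ H(κ₋|m) + δ H(κ₊|m)`, where `κ∓` are the push-forwards of `π` by
`(x,y) ↦ ⌊(x+y)/2⌋` and `(x,y) ↦ ⌈(x+y)/2⌉` (coordinatewise). -/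
theorem entropy_midpoint_zn {n : ℕ} (hn : 1 ≤ n) (α β γ δ : ℝ)
    (hα : 0 < α) (hβ : 0 < β) (hγ : 0 < γ) (hδ : 0 < δ)
    (hmix : max α β ≤ min γ δ)
    (μ ν : (Fin n → ℤ) → ℝ) (hμ : IsPMF μ) (hν : IsPMF ν) :
    ∃ π : (Fin n → ℤ) × (Fin n → ℤ) → ℝ, IsCoupling π μ ν ∧
      α * relEntropy μ + β * relEntropy ν ≥
        γ * relEntropy
          (pushforward (fun p => fun i => ⌊((p.1 i + p.2 i : ℤ) : ℚ) / 2⌋) π) +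
        δ * relEntropy
          (pushforward (fun p => fun i => ⌈((p.1 i + p.2 i : ℤ) : ℚ) / 2⌉) π) := by
  obtain ⟨π, hπ, hle⟩ := entropy_midpoint_zn_general hμ hν
  exact ⟨π, hπ, hle α β γ δ hγ.le hδ.le hmix⟩
end
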